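/- Let d ≥ 2 and let K : ℝ^d → ℝ be continuous, isotropic, positive definite, whose radial profile is regularly varying (at infinity) with index α ∈ [0,1]; in the case α = 1 assume moreover K(x) ∼ x^{−1} (log x)^{−γ} as x → ∞ for some γ < 1. Let r : (0,∞) → [0,∞) satisfy r(R) = R^{o(1)} as R → ∞ (i.e. log(max(r(R),2))/log R → 0). Then, as R → ∞, Cap_K([0,R] × [0,r(R)]^{d−1}) ∼ Cap_K([0,R] × {0}^{d−1}). -/

import Mathlib

open Filter MeasureTheory

/-- A function `L` is slowly varying (at infinity) if it is continuous and strictly positive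
on `(0,∞)` and `L(ax)/L(x) → 1` as `x → ∞` for every `a > 0`. -/
def SlowlyVarying (L : ℝ → ℝ) : Prop :=
  ContinuousOn L (Set.Ioi 0) ∧ (∀ x : ℝ, 0 < x → 0 < L x) ∧
    ∀ a : ℝ, 0 < a → Tendsto (fun x => L (a * x) / L x) atTop (nhds 1)

/-- A continuous function `h` on `(0,∞)` is regularly varying (at infinity) with index `α`
if `h(x) ∼ x^(-α) L(x)` as `x → ∞` for some slowly varying `L`. -/
def RegularlyVarying (h : ℝ → ℝ) (α : ℝ) : Prop :=
  ContinuousOn h (Set.Ioi 0) ∧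
    ∃ L : ℝ → ℝ, SlowlyVarying L ∧
      Tendsto (fun x => h x / (x ^ (-α) * L x)) atTop (nhds 1)

/-- A kernel `K : ℝ^d → ℝ` is positive definite if all quadratic forms
`∑ i j, c i * c j * K (x i - x j)` are nonnegative. -/
def IsPosDefKernel {d : ℕ} (K : EuclideanSpace ℝ (Fin d) → ℝ) : Prop :=
  ∀ (n : ℕ) (x : Fin n → EuclideanSpace ℝ (Fin d)) (c : Fin n → ℝ),
    0 ≤ ∑ i : Fin n, ∑ j : Fin n, c i * c j * K (x i - x j)

/-- The energy `E_K(μ) = ∫∫ K(x-y) dμ(x) dμ(y)`. -/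
noncomputable def energyE {d : ℕ} (K : EuclideanSpace ℝ (Fin d) → ℝ)
    (μ : Measure (EuclideanSpace ℝ (Fin d))) : ℝ :=
  ∫ x, ∫ y, K (x - y) ∂μ ∂μ

/-- The capacity of `D` with respect to `K`: the reciprocal of the minimal energy of a
Borel probability measure supported on `D`. -/
noncomputable def capacityE {d : ℕ} (K : EuclideanSpace ℝ (Fin d) → ℝ)
    (D : Set (EuclideanSpace ℝ (Fin d))) : ℝ :=
  (sInf {e : ℝ | ∃ μ : Measure (EuclideanSpace ℝ (Fin d)),
      IsProbabilityMeasure μ ∧ μ Dᶜ = 0 ∧ e = energyE K μ})⁻¹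

/-- The tube `[0,R] × [0,ρ]^{d-1} ⊂ ℝ^d`. -/
def tubeSet (d : ℕ) (R ρ : ℝ) : Set (EuclideanSpace ℝ (Fin d)) :=
  {x | ∀ i : Fin d, if (i : ℕ) = 0 then x i ∈ Set.Icc 0 R else x i ∈ Set.Icc 0 ρ}

/-- The segment `[0,R] × {0}^{d-1} ⊂ ℝ^d`. -/
def segmentSet (d : ℕ) (R : ℝ) : Set (EuclideanSpace ℝ (Fin d)) :=
  {x | ∀ i : Fin d, if (i : ℕ) = 0 then x i ∈ Set.Icc 0 R else x i = 0}

/-!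
The capacity is the reciprocal of the minimal energy, so it suffices to compare energies, and only
the segment needs an upper bound. Let `μ` be a probability measure on the tube, and smear it along
the axis by independent uniform noise on an interval of length `h = (s - 1) R` with `s` close to
`1`. As `K` is positive definite this does not increase the energy, and the axial separation of two
independent points acquires a density bounded by `1 / h`. Projecting to the axis and dilating by
`1 / s` puts the smeared measure on the segment. For a pair of points with separation `z` and axial
separation `u`, regular variation gives `k (|u| / s) ≤ A * K z` with `A` close to `1` as soon as
`|u| ≥ T`, for some `T` of order `1 + r(R)`; the other pairs contribute `O(G(T) / R)`, where `G(x)`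
is the integral of `|k|` over `[0,x]`. Testing `μ` against its smearing over `[-2R,2R]` bounds the
energy of `μ` below by a multiple of `G(R) / R`, and `G(T) = o(G(R))` because `r(R) = R^{o(1)}`.
-/

section Sampling

variable {X : Type*} [MeasurableSpace X] {μ : Measure X} [IsProbabilityMeasure μ]

theorem measurePreserving_eval_prodMk_eval {ι : Type*} [Fintype ι] {i j : ι} (hij : i ≠ j) :
    MeasurePreserving (fun ω : ι → X => (ω i, ω j)) (Measure.pi fun _ => μ) (μ.prod μ) := by
  have hindep : ProbabilityTheory.IndepFun (fun ω : ι → X => ω i) (fun ω => ω j)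
      (Measure.pi fun _ => μ) :=
    (ProbabilityTheory.iIndepFun_pi (X := fun _ : ι => id) fun _ => aemeasurable_id).indepFun hij
  rw [ProbabilityTheory.indepFun_iff_map_prod_eq_prod_map_map (measurable_pi_apply i).aemeasurable
      (measurable_pi_apply j).aemeasurable,
    (measurePreserving_eval (fun _ : ι => μ) i).map_eq,
    (measurePreserving_eval (fun _ : ι => μ) j).map_eq] at hindep
  exact ⟨by fun_prop, hindep⟩

theorem nonneg_of_forall_nat_mul_add_nonneg {a b : ℝ}
    (h : ∀ n : ℕ, 0 ≤ n * a + n * (n - 1) * b) : 0 ≤ b := by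
  by_contra! hb
  obtain ⟨n, hn⟩ := exists_lt_nsmul (neg_pos.2 hb) a
  have hn_succ := h (n + 1)
  rw [nsmul_eq_mul] at hn
  push_cast at hn_succ
  nlinarith [n.cast_nonneg (α := ℝ)]

-- Average the double sums over i.i.d. samples `x` of `μ`: the `n * (n - 1)` off-diagonal terms
-- dominate the `n` diagonal ones.
theorem integral_prod_self_nonneg_of_sum_nonneg {Φ : X × X → ℝ}
    (hΦ : Integrable Φ (μ.prod μ)) (hdiag : Integrable (fun x => Φ (x, x)) μ)
    (hsum : ∀ (n : ℕ) (x : Fin n → X), 0 ≤ ∑ i, ∑ j, Φ (x i, x j)) :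
    0 ≤ ∫ p, Φ p ∂(μ.prod μ) := by
  refine nonneg_of_forall_nat_mul_add_nonneg (a := ∫ x, Φ (x, x) ∂μ) fun n => ?_
  let P : Measure (Fin n → X) := Measure.pi fun _ => μ
  have hpair (i j : Fin n) : Integrable (fun ω => Φ (ω i, ω j)) P ∧
      ∫ ω, Φ (ω i, ω j) ∂P =
        if i = j then ∫ x, Φ (x, x) ∂μ else ∫ p, Φ p ∂(μ.prod μ) := by
    split_ifs with hij
    · subst hij
      have hmp := measurePreserving_eval (fun _ : Fin n => μ) i
      refine ⟨hmp.integrable_comp_of_integrable hdiag, ?_⟩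
      exact (integral_map hmp.aemeasurable (hmp.map_eq.symm ▸ hdiag.1)).symm.trans
        (by rw [hmp.map_eq])
    · have hmp := measurePreserving_eval_prodMk_eval (μ := μ) hij
      refine ⟨hmp.integrable_comp_of_integrable hΦ, ?_⟩
      exact (integral_map hmp.aemeasurable (hmp.map_eq.symm ▸ hΦ.1)).symm.trans
        (by rw [hmp.map_eq])
  calc 0 ≤ ∫ ω, ∑ i, ∑ j, Φ (ω i, ω j) ∂P := integral_nonneg fun ω => hsum n ω
    _ = ∑ i, ∑ j, ∫ ω, Φ (ω i, ω j) ∂P := by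
      rw [integral_finsetSum _ fun i _ => integrable_finsetSum _ fun j _ => (hpair i j).1]
      exact Finset.sum_congr rfl fun i _ => integral_finsetSum _ fun j _ => (hpair i j).1
    _ = n * ∫ x, Φ (x, x) ∂μ + n * (n - 1) * ∫ p, Φ p ∂(μ.prod μ) := by
      simp only [(hpair _ _).2, Finset.sum_ite, Finset.sum_const, Finset.filter_eq,
        Finset.mem_univ, if_true, Finset.card_singleton, Finset.filter_ne,
        Finset.card_erase_of_mem, Finset.card_univ, Fintype.card_fin, nsmul_eq_mul]
      rcases n with _ | n
      · simp
      · push_cast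
        rw [add_sub_cancel_right]
        ring

end Sampling

section PositiveDefinite

variable {d : ℕ} {K : EuclideanSpace ℝ (Fin d) → ℝ}
  {μ ν σ : Measure (EuclideanSpace ℝ (Fin d))}

/-- The mutual energy `∫∫ K(x-y) dμ(x) dν(y)`, the bilinear form whose diagonal is `energyE`. -/
noncomputable def mutualEnergy (K : EuclideanSpace ℝ (Fin d) → ℝ)
    (μ ν : Measure (EuclideanSpace ℝ (Fin d))) : ℝ :=
  ∫ x, ∫ y, K (x - y) ∂ν ∂μ

theorem mutualEnergy_self : mutualEnergy K μ μ = energyE K μ :=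
  rfl

namespace IsPosDefKernel

theorem sum_nonneg (hpd : IsPosDefKernel K) {ι : Type*} [Fintype ι]
    (x : ι → EuclideanSpace ℝ (Fin d)) (c : ι → ℝ) :
    0 ≤ ∑ i, ∑ j, c i * c j * K (x i - x j) := by
  let e := Fintype.equivFin ι
  refine (hpd _ (x ∘ e.symm) (c ∘ e.symm)).trans_eq ?_
  exact Fintype.sum_equiv e.symm _ _ fun i => Fintype.sum_equiv e.symm _ _ fun j => rfl

theorem sum_cross_difference_nonneg (hpd : IsPosDefKernel K) {ι : Type*} [Fintype ι]
    (x y : ι → EuclideanSpace ℝ (Fin d)) :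
    0 ≤ ∑ i, ∑ j, (K (x i - x j) + K (y i - y j) - K (x i - y j) - K (y i - x j)) := by
  have h := hpd.sum_nonneg (Sum.elim x y) (Sum.elim (fun _ => 1) fun _ => -1)
  simp only [Fintype.sum_sum_type, Sum.elim_inl, Sum.elim_inr, ← Finset.sum_add_distrib] at h
  refine h.trans_eq (Finset.sum_congr rfl fun i _ => Finset.sum_congr rfl fun j _ => ?_)
  ring

variable (hpd : IsPosDefKernel K) (heven : K.Even)
include hpd heven

theorem abs_le_apply_zero (x : EuclideanSpace ℝ (Fin d)) : |K x| ≤ K 0 := by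
  have hplus := hpd 2 ![x, 0] ![1, 1]
  have hminus := hpd 2 ![x, 0] ![1, -1]
  simp only [Fin.sum_univ_two, Matrix.cons_val_zero, Matrix.cons_val_one, mul_one, one_mul, mul_neg,
    neg_mul, neg_neg, sub_zero, sub_self, zero_sub, heven x] at hplus hminus
  rw [abs_le]
  constructor <;> linarith

variable (hK : Measurable K)
include hK

theorem integrable_comp {Ω : Type*} [MeasurableSpace Ω] {m : Measure Ω} [IsFiniteMeasure m]
    {f : Ω → EuclideanSpace ℝ (Fin d)} (hf : Measurable f) : Integrable (fun ω => K (f ω)) m :=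
  .of_bound (hK.comp hf).aestronglyMeasurable (K 0) (.of_forall fun ω =>
    hpd.abs_le_apply_zero heven (f ω))

theorem mutualEnergy_eq_integral_prod [IsFiniteMeasure μ] [IsFiniteMeasure ν] :
    mutualEnergy K μ ν = ∫ p, K (p.1 - p.2) ∂(μ.prod ν) :=
  (integral_prod _ (hpd.integrable_comp heven hK (measurable_fst.sub measurable_snd))).symm

theorem mutualEnergy_map_map {Ω Ω' : Type*} [MeasurableSpace Ω] [MeasurableSpace Ω']
    {m : Measure Ω} {m' : Measure Ω'} [IsFiniteMeasure m] [IsFiniteMeasure m']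
    {f : Ω → EuclideanSpace ℝ (Fin d)} {g : Ω' → EuclideanSpace ℝ (Fin d)}
    (hf : Measurable f) (hg : Measurable g) :
    mutualEnergy K (m.map f) (m'.map g) = ∫ p, K (f p.1 - g p.2) ∂(m.prod m') := by
  have hdiff : Measurable fun p : EuclideanSpace ℝ (Fin d) × EuclideanSpace ℝ (Fin d) =>
      K (p.1 - p.2) := by fun_prop
  rw [hpd.mutualEnergy_eq_integral_prod heven hK, Measure.map_prod_map _ _ hf hg,
    integral_map (hf.prodMap hg).aemeasurable hdiff.aestronglyMeasurable]
  rfl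

theorem mutualEnergy_comm [IsFiniteMeasure μ] [IsFiniteMeasure ν] :
    mutualEnergy K μ ν = mutualEnergy K ν μ := by
  rw [hpd.mutualEnergy_eq_integral_prod heven hK, hpd.mutualEnergy_eq_integral_prod heven hK,
    ← integral_prod_swap]
  congr with p
  simpa using heven (p.1 - p.2)

theorem energyE_map_add_right [IsFiniteMeasure μ] (v : EuclideanSpace ℝ (Fin d)) :
    energyE K (μ.map (· + v)) = energyE K μ := by
  rw [← mutualEnergy_self, ← mutualEnergy_self,
    hpd.mutualEnergy_map_map heven hK (measurable_add_const v) (measurable_add_const v),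
    hpd.mutualEnergy_eq_integral_prod heven hK]
  simp only [add_sub_add_right_eq_sub]

theorem energyE_nonneg [IsProbabilityMeasure μ] : 0 ≤ energyE K μ := by
  rw [← mutualEnergy_self, hpd.mutualEnergy_eq_integral_prod heven hK]
  refine integral_prod_self_nonneg_of_sum_nonneg
    (hpd.integrable_comp heven hK (measurable_fst.sub measurable_snd))
    (hpd.integrable_comp heven hK (measurable_id.sub measurable_id)) fun n x => ?_
  simpa using hpd n x 1

theorem mutualEnergy_le_half_add [IsProbabilityMeasure μ] [IsProbabilityMeasure ν] :
    mutualEnergy K μ ν ≤ (energyE K μ + energyE K ν) / 2 := by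
  let π := μ.prod ν
  have hfst : π.map Prod.fst = μ := by simp [π, Measure.map_fst_prod]
  have hsnd : π.map Prod.snd = ν := by simp [π, Measure.map_snd_prod]
  have hint {f g : EuclideanSpace ℝ (Fin d) × EuclideanSpace ℝ (Fin d) → EuclideanSpace ℝ (Fin d)}
      (hf : Measurable f) (hg : Measurable g) :
      Integrable (fun q => K (f q.1 - g q.2)) (π.prod π) :=
    hpd.integrable_comp heven hK ((hf.comp measurable_fst).sub (hg.comp measurable_snd))
  have h₁₁ := hint measurable_fst measurable_fst
  have h₂₂ := hint measurable_snd measurable_snd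
  have h₁₂ := hint measurable_fst measurable_snd
  have h₂₁ := hint measurable_snd measurable_fst
  have hdiag {f g : EuclideanSpace ℝ (Fin d) × EuclideanSpace ℝ (Fin d) →
      EuclideanSpace ℝ (Fin d)} (hf : Measurable f) (hg : Measurable g) :
      Integrable (fun p => K (f p - g p)) π := hpd.integrable_comp heven hK (hf.sub hg)
  have h := integral_prod_self_nonneg_of_sum_nonneg (((h₁₁.add h₂₂).sub h₁₂).sub h₂₁)
    ((((hdiag measurable_fst measurable_fst).add (hdiag measurable_snd measurable_snd)).sub
      (hdiag measurable_fst measurable_snd)).sub (hdiag measurable_snd measurable_fst))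
    fun n x => hpd.sum_cross_difference_nonneg (fun i => (x i).1) fun i => (x i).2
  rw [integral_sub' ((h₁₁.add h₂₂).sub h₁₂) h₂₁, integral_sub' (h₁₁.add h₂₂) h₁₂,
    integral_add' h₁₁ h₂₂] at h
  simp only [← hpd.mutualEnergy_map_map heven hK measurable_fst measurable_fst,
    ← hpd.mutualEnergy_map_map heven hK measurable_snd measurable_snd,
    ← hpd.mutualEnergy_map_map heven hK measurable_fst measurable_snd,
    ← hpd.mutualEnergy_map_map heven hK measurable_snd measurable_fst, hfst, hsnd,
    mutualEnergy_self, hpd.mutualEnergy_comm heven hK (μ := ν)] at h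
  linarith

theorem integrable_mutualEnergy_map_add_right [IsFiniteMeasure μ] [IsFiniteMeasure ν]
    [IsFiniteMeasure σ] : Integrable (fun s => mutualEnergy K μ (ν.map (· + s))) σ := by
  have hmap (s : EuclideanSpace ℝ (Fin d)) : mutualEnergy K μ (ν.map (· + s)) =
      ∫ p, K (p.1 - (p.2 + s)) ∂(μ.prod ν) := by
    simpa using hpd.mutualEnergy_map_map heven hK measurable_id (measurable_add_const s)
      (m := μ) (m' := ν)
  simp only [hmap]
  have hint : Integrable (fun q : EuclideanSpace ℝ (Fin d) ×
      (EuclideanSpace ℝ (Fin d) × EuclideanSpace ℝ (Fin d)) => K (q.2.1 - (q.2.2 + q.1)))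
      (σ.prod (μ.prod ν)) := hpd.integrable_comp heven hK (by fun_prop)
  exact hint.integral_prod_left

theorem mutualEnergy_conv_right [IsProbabilityMeasure μ] [IsProbabilityMeasure ν]
    [IsProbabilityMeasure σ] :
    mutualEnergy K μ (ν ∗ σ) = ∫ s, mutualEnergy K μ (ν.map (· + s)) ∂σ := by
  have hconv (x : EuclideanSpace ℝ (Fin d)) :
      ∫ y, K (x - y) ∂(ν ∗ σ) = ∫ s, ∫ y, K (x - (y + s)) ∂ν ∂σ := by
    rw [Measure.conv_comm, integral_conv
      (hpd.integrable_comp heven hK (f := fun y => x - y) (by fun_prop))]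
    simp only [add_comm]
  have hmap (s x : EuclideanSpace ℝ (Fin d)) :
      ∫ y, K (x - y) ∂(ν.map (· + s)) = ∫ y, K (x - (y + s)) ∂ν :=
    integral_map (by fun_prop) (hK.comp (by fun_prop)).aestronglyMeasurable
  simp only [mutualEnergy, hconv, hmap]
  have : Integrable (fun q : (EuclideanSpace ℝ (Fin d) × EuclideanSpace ℝ (Fin d)) ×
      EuclideanSpace ℝ (Fin d) => K (q.1.1 - (q.2 + q.1.2))) ((μ.prod σ).prod ν) :=
    hpd.integrable_comp heven hK (by fun_prop)
  exact integral_integral_swap this.integral_prod_left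

theorem mutualEnergy_conv_right_le [IsProbabilityMeasure μ] [IsProbabilityMeasure ν]
    [IsProbabilityMeasure σ] :
    mutualEnergy K μ (ν ∗ σ) ≤ (energyE K μ + energyE K ν) / 2 := by
  rw [hpd.mutualEnergy_conv_right heven hK]
  calc ∫ s, mutualEnergy K μ (ν.map (· + s)) ∂σ
      ≤ ∫ _, (energyE K μ + energyE K ν) / 2 ∂σ := by
        refine integral_mono ?_ (integrable_const _) fun s => ?_
        · exact hpd.integrable_mutualEnergy_map_add_right heven hK
        · have := Measure.isProbabilityMeasure_map (μ := ν) (measurable_add_const s).aemeasurable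
          simpa only [hpd.energyE_map_add_right heven hK] using
            hpd.mutualEnergy_le_half_add heven hK (μ := μ) (ν := ν.map (· + s))
    _ = _ := by simp

theorem energyE_conv_le [IsProbabilityMeasure μ] [IsProbabilityMeasure σ] :
    energyE K (μ ∗ σ) ≤ energyE K μ := by
  have h := hpd.mutualEnergy_conv_right_le heven hK (μ := μ ∗ σ) (ν := μ) (σ := σ)
  rw [mutualEnergy_self] at h
  linarith

theorem mutualEnergy_self_conv_le [IsProbabilityMeasure μ] [IsProbabilityMeasure σ] :
    mutualEnergy K μ (μ ∗ σ) ≤ energyE K μ := by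
  have h := hpd.mutualEnergy_conv_right_le heven hK (μ := μ) (ν := μ) (σ := σ)
  linarith

end IsPosDefKernel

end PositiveDefinite

section UniformNoise

open scoped ProbabilityTheory

variable {d : ℕ} [NeZero d] {μ ν : Measure (EuclideanSpace ℝ (Fin d))}

theorem continuous_single_zero : Continuous fun v : ℝ => EuclideanSpace.single (0 : Fin d) v :=
  (Isometry.of_dist_eq fun v w => by simp).continuous

/-- The uniform probability measure on the segment `[a,b] × {0}^{d-1}` of the first axis of `ℝ^d`,
used to spread out measures along that axis. -/
noncomputable def uniformSegment (d : ℕ) [NeZero d] (a b : ℝ) :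
    Measure (EuclideanSpace ℝ (Fin d)) :=
  volume[|Set.Icc a b].map fun v => EuclideanSpace.single 0 v

/-- The law of the first coordinate of `X - Y` for independent `X ∼ μ` and `Y ∼ ν`. -/
noncomputable def axialDifference (μ ν : Measure (EuclideanSpace ℝ (Fin d))) : Measure ℝ :=
  (μ.prod ν).map fun p => p.1 0 - p.2 0

instance [IsProbabilityMeasure μ] [IsProbabilityMeasure ν] :
    IsProbabilityMeasure (axialDifference μ ν) :=
  Measure.isProbabilityMeasure_map (by fun_prop)

theorem isProbabilityMeasure_cond_Icc {a b : ℝ} (hab : a < b) :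
    IsProbabilityMeasure (volume[|Set.Icc a b]) :=
  ProbabilityTheory.cond_isProbabilityMeasure_of_finite
    (by simpa using hab) (by simp)

theorem isProbabilityMeasure_uniformSegment {a b : ℝ} (hab : a < b) :
    IsProbabilityMeasure (uniformSegment d a b) :=
  have := isProbabilityMeasure_cond_Icc hab
  Measure.isProbabilityMeasure_map continuous_single_zero.measurable.aemeasurable

theorem axialDifference_conv_uniformSegment_apply [IsProbabilityMeasure μ]
    {a b : ℝ} (hab : a < b) {s : Set ℝ} (hs : MeasurableSet s) :
    axialDifference ν (μ ∗ uniformSegment d a b) s =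
      ∫⁻ w, volume[|Set.Icc a b] {v | w - v ∈ s} ∂(axialDifference ν μ) := by
  have := isProbabilityMeasure_cond_Icc hab
  have := isProbabilityMeasure_uniformSegment (d := d) hab
  have hnoise : Measurable fun w => volume[|Set.Icc a b] {v | w - v ∈ s} :=
    measurable_measure_prodMk_left (s := {q : ℝ × ℝ | q.1 - q.2 ∈ s})
      ((measurable_fst.sub measurable_snd) hs)
  have hslab (w : ℝ) : MeasurableSet {y : EuclideanSpace ℝ (Fin d) | w - y 0 ∈ s} :=
    (by fun_prop : Measurable fun y : EuclideanSpace ℝ (Fin d) => w - y 0) hs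
  have hσ (w : ℝ) : uniformSegment d a b {v | w - v 0 ∈ s} =
      volume[|Set.Icc a b] {v | w - v ∈ s} := by
    rw [uniformSegment, Measure.map_apply continuous_single_zero.measurable (hslab w)]
    simp
  have hconv (w : ℝ) : (μ ∗ uniformSegment d a b) {y | w - y 0 ∈ s} =
      ∫⁻ y, volume[|Set.Icc a b] {v | w - y 0 - v ∈ s} ∂μ := by
    rw [Measure.conv, Measure.map_apply measurable_add (hslab w),
      Measure.prod_apply (measurable_add (hslab w))]
    refine lintegral_congr fun y => ?_
    rw [← hσ]
    simp only [Set.preimage_ofPred_eq, PiLp.add_apply, sub_sub]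
  rw [axialDifference, Measure.map_apply (by fun_prop) hs, axialDifference,
    lintegral_map hnoise (by fun_prop),
    lintegral_prod (fun p : EuclideanSpace ℝ (Fin d) × EuclideanSpace ℝ (Fin d) =>
      volume[|Set.Icc a b] {v | p.1 0 - p.2 0 - v ∈ s})
      (hnoise.comp (by fun_prop)).aemeasurable,
    Measure.prod_apply ((by fun_prop : Measurable fun p : EuclideanSpace ℝ (Fin d) ×
      EuclideanSpace ℝ (Fin d) => p.1 0 - p.2 0) hs)]
  exact lintegral_congr fun x => hconv (x 0)

theorem axialDifference_conv_uniformSegment_le [IsProbabilityMeasure μ]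
    [IsProbabilityMeasure ν] {a b : ℝ} (hab : a < b) :
    axialDifference ν (μ ∗ uniformSegment d a b) ≤ (ENNReal.ofReal (b - a))⁻¹ • volume := by
  refine Measure.le_iff.2 fun s hs => ?_
  rw [axialDifference_conv_uniformSegment_apply hab hs]
  calc _ ≤ ∫⁻ _, (ENNReal.ofReal (b - a))⁻¹ * volume s ∂(axialDifference ν μ) := by
        refine lintegral_mono fun w => ?_
        rw [ProbabilityTheory.cond_apply measurableSet_Icc, Real.volume_Icc,
          ← (Measure.measurePreserving_sub_left volume w).measure_preimage hs.nullMeasurableSet]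
        gcongr
        exact Set.inter_subset_right
    _ = _ := by simp

theorem restrict_axialDifference_conv_uniformSegment [IsProbabilityMeasure μ]
    [IsProbabilityMeasure ν] {R : ℝ} (hR : 0 < R)
    (h : ∀ᵐ w ∂(axialDifference ν μ), |w| ≤ R) :
    (axialDifference ν (μ ∗ uniformSegment d (-(2 * R)) (2 * R))).restrict (Set.Icc (-R) R) =
      (ENNReal.ofReal (4 * R))⁻¹ • volume.restrict (Set.Icc (-R) R) := by
  ext s hs
  have hsR := hs.inter (measurableSet_Icc (a := -R) (b := R))
  rw [Measure.restrict_apply hs, axialDifference_conv_uniformSegment_apply (by linarith) hsR,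
    Measure.smul_apply, Measure.restrict_apply hs, smul_eq_mul]
  calc _ = ∫⁻ _, (ENNReal.ofReal (4 * R))⁻¹ * volume (s ∩ Set.Icc (-R) R)
          ∂(axialDifference ν μ) := by
        refine lintegral_congr_ae (h.mono fun w hw => ?_)
        have hsub : {v | w - v ∈ s ∩ Set.Icc (-R) R} ⊆ Set.Icc (-(2 * R)) (2 * R) := by
          rintro v ⟨-, hv⟩
          rw [abs_le] at hw
          constructor <;> linarith [hv.1, hv.2]
        beta_reduce
        rw [ProbabilityTheory.cond_apply measurableSet_Icc, Real.volume_Icc,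
          Set.inter_eq_self_of_subset_right hsub,
          ← (Measure.measurePreserving_sub_left volume w).measure_preimage hsR.nullMeasurableSet]
        congr 3
        ring
    _ = _ := by simp

theorem integral_axialDifference {N : ℝ → ℝ}
    (hN : AEStronglyMeasurable N (axialDifference μ ν)) :
    ∫ w, N w ∂(axialDifference μ ν) = ∫ p, N (p.1 0 - p.2 0) ∂(μ.prod ν) :=
  integral_map (by fun_prop) hN

theorem integrable_axialDifference_conv_uniformSegment [IsProbabilityMeasure μ]
    [IsProbabilityMeasure ν] {a b : ℝ} (hab : a < b) {N : ℝ → ℝ} (hN : Integrable N) :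
    Integrable N (axialDifference ν (μ ∗ uniformSegment d a b)) :=
  (hN.smul_measure (by simpa using hab)).mono_measure
    (axialDifference_conv_uniformSegment_le hab)

theorem integral_axialDifference_conv_uniformSegment_le [IsProbabilityMeasure μ]
    [IsProbabilityMeasure ν] {a b : ℝ} (hab : a < b) {N : ℝ → ℝ} (hN0 : 0 ≤ N)
    (hN : Integrable N) :
    ∫ w, N w ∂(axialDifference ν (μ ∗ uniformSegment d a b)) ≤ (b - a)⁻¹ * ∫ u, N u := by
  calc _ ≤ ∫ u, N u ∂((ENNReal.ofReal (b - a))⁻¹ • volume) :=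
        integral_mono_measure (axialDifference_conv_uniformSegment_le hab) (.of_forall hN0)
          (hN.smul_measure (by simpa using hab))
    _ = _ := by
        rw [integral_smul_measure, smul_eq_mul, ENNReal.toReal_inv,
          ENNReal.toReal_ofReal (sub_nonneg.2 hab.le)]

theorem ae_conv_uniformSegment {a b : ℝ} (hab : a < b)
    {p : EuclideanSpace ℝ (Fin d) → Prop} (hp : MeasurableSet {x | p x})
    (h : ∀ᵐ x ∂μ, ∀ v ∈ Set.Icc a b, p (x + EuclideanSpace.single 0 v)) :
    ∀ᵐ x ∂(μ ∗ uniformSegment d a b), p x := by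
  have := isProbabilityMeasure_uniformSegment (d := d) hab
  rw [Measure.conv, ae_map_iff (by fun_prop) hp]
  refine (Measure.ae_prod_iff_ae_ae (measurable_add hp)).2 ?_
  filter_upwards [h] with x hx
  refine (ae_map_iff continuous_single_zero.aemeasurable (measurable_const_add x hp)).2 ?_
  exact (ProbabilityTheory.ae_cond_mem measurableSet_Icc).mono hx

end UniformNoise

section Tube

theorem segmentSet_eq_tubeSet_zero {d : ℕ} {R : ℝ} : segmentSet d R = tubeSet d R 0 := by
  simp only [segmentSet, tubeSet, Set.Icc_self, Set.mem_singleton_iff]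

theorem ae_prod_abs_sub_apply_le {d : ℕ} {μ ν : Measure (EuclideanSpace ℝ (Fin d))}
    {i : Fin d} {a : ℝ} (hμ : ∀ᵐ x ∂μ, x i ∈ Set.Icc 0 a) (hν : ∀ᵐ x ∂ν, x i ∈ Set.Icc 0 a) :
    ∀ᵐ p ∂(μ.prod ν), |(p.1 - p.2) i| ≤ a := by
  filter_upwards [Measure.quasiMeasurePreserving_fst.ae hμ,
    Measure.quasiMeasurePreserving_snd.ae hν] with p hx hy
  rw [PiLp.sub_apply, abs_le]
  constructor <;> linarith [hx.1, hx.2, hy.1, hy.2]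

variable {d : ℕ} [NeZero d] {μ ν : Measure (EuclideanSpace ℝ (Fin d))}
  {x : EuclideanSpace ℝ (Fin d)} {R ρ : ℝ}

theorem ae_prod_forall_ne_zero_abs_sub_apply_le
    (hμ : ∀ i ≠ 0, ∀ᵐ x ∂μ, x i ∈ Set.Icc 0 ρ) (hν : ∀ i ≠ 0, ∀ᵐ x ∂ν, x i ∈ Set.Icc 0 ρ) :
    ∀ᵐ p ∂(μ.prod ν), ∀ i ≠ 0, |(p.1 - p.2) i| ≤ ρ :=
  ae_all_iff.2 fun i => eventually_imp_distrib_left.2 fun hi =>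
    ae_prod_abs_sub_apply_le (hμ i hi) (hν i hi)

theorem mem_tubeSet_iff :
    x ∈ tubeSet d R ρ ↔ x 0 ∈ Set.Icc 0 R ∧ ∀ i ≠ 0, x i ∈ Set.Icc 0 ρ := by
  simp only [tubeSet, Set.mem_ofPred_eq, Fin.val_eq_zero_iff]
  grind

theorem tubeSet_mono_right {ρ' : ℝ} (h : ρ ≤ ρ') : tubeSet d R ρ ⊆ tubeSet d R ρ' := fun _ hx =>
  have ⟨haxis, hcross⟩ := mem_tubeSet_iff.1 hx
  mem_tubeSet_iff.2 ⟨haxis, fun i hi => ⟨(hcross i hi).1, (hcross i hi).2.trans h⟩⟩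

theorem measurableSet_tubeSet : MeasurableSet (tubeSet d R ρ) := by
  have h : tubeSet d R ρ = (fun x => x 0) ⁻¹' Set.Icc 0 R ∩
      ⋂ i ≠ (0 : Fin d), (fun x => x i) ⁻¹' Set.Icc 0 ρ := by
    ext x
    simp [mem_tubeSet_iff]
  rw [h]
  refine .inter (measurableSet_Icc.preimage (by fun_prop)) ?_
  exact .iInter fun i => .iInter fun _ => measurableSet_Icc.preimage (by fun_prop)

theorem measurableSet_segmentSet : MeasurableSet (segmentSet d R) :=
  segmentSet_eq_tubeSet_zero ▸ measurableSet_tubeSet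

theorem single_zero_mem_segmentSet {t : ℝ} (ht : t ∈ Set.Icc 0 R) :
    EuclideanSpace.single 0 t ∈ segmentSet d R := by
  rw [segmentSet_eq_tubeSet_zero, mem_tubeSet_iff]
  exact ⟨by simpa using ht, fun i hi => by simp [hi]⟩

theorem ae_conv_uniformSegment_apply_zero_mem {h : ℝ} (hh : 0 < h)
    (hμ : ∀ᵐ x ∂μ, x ∈ tubeSet d R ρ) :
    ∀ᵐ x ∂(μ ∗ uniformSegment d 0 h), x 0 ∈ Set.Icc 0 (R + h) := by
  refine ae_conv_uniformSegment hh (measurableSet_Icc.preimage (by fun_prop)) ?_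
  filter_upwards [hμ] with x hx v hv
  have hx0 := (mem_tubeSet_iff.1 hx).1
  simpa using ⟨add_nonneg hx0.1 hv.1, add_le_add hx0.2 hv.2⟩

theorem ae_conv_uniformSegment_apply_mem {a b : ℝ} (hab : a < b)
    (hμ : ∀ᵐ x ∂μ, x ∈ tubeSet d R ρ) {i : Fin d} (hi : i ≠ 0) :
    ∀ᵐ x ∂(μ ∗ uniformSegment d a b), x i ∈ Set.Icc 0 ρ := by
  refine ae_conv_uniformSegment hab (measurableSet_Icc.preimage (by fun_prop)) ?_
  filter_upwards [hμ] with x hx v _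
  simpa [hi] using (mem_tubeSet_iff.1 hx).2 i hi

end Tube

section MinimalEnergy

variable {d : ℕ} {K : EuclideanSpace ℝ (Fin d) → ℝ}
  {μ : Measure (EuclideanSpace ℝ (Fin d))} {R ρ : ℝ}

/-- The infimum of the energies of the probability measures carried by `D`, whose reciprocal is
`capacityE K D`. -/
noncomputable def minEnergy (K : EuclideanSpace ℝ (Fin d) → ℝ)
    (D : Set (EuclideanSpace ℝ (Fin d))) : ℝ :=
  sInf {e | ∃ μ : Measure (EuclideanSpace ℝ (Fin d)),
    IsProbabilityMeasure μ ∧ μ Dᶜ = 0 ∧ e = energyE K μ}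

theorem capacityE_eq_inv_minEnergy {D : Set (EuclideanSpace ℝ (Fin d))} :
    capacityE K D = (minEnergy K D)⁻¹ :=
  rfl

theorem le_minEnergy {D : Set (EuclideanSpace ℝ (Fin d))} (hD : D.Nonempty) {e : ℝ}
    (h : ∀ μ : Measure (EuclideanSpace ℝ (Fin d)), IsProbabilityMeasure μ →
      (∀ᵐ x ∂μ, x ∈ D) → e ≤ energyE K μ) : e ≤ minEnergy K D := by
  obtain ⟨x, hx⟩ := hD
  have hcarried : ∀ᵐ y ∂Measure.dirac x, y ∈ D := by simpa [ae_dirac_eq] using hx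
  refine le_csInf ⟨_, Measure.dirac x, inferInstance, hcarried, rfl⟩ ?_
  rintro _ ⟨μ, hμ, hD, rfl⟩
  exact h μ hμ hD

namespace IsPosDefKernel

variable (hpd : IsPosDefKernel K) (heven : K.Even) (hK : Measurable K)
include hpd heven hK

theorem minEnergy_le_energyE [IsProbabilityMeasure μ] {D : Set (EuclideanSpace ℝ (Fin d))}
    (h : ∀ᵐ x ∂μ, x ∈ D) : minEnergy K D ≤ energyE K μ := by
  refine csInf_le ⟨0, ?_⟩ ⟨μ, inferInstance, h, rfl⟩
  rintro _ ⟨μ', _, -, rfl⟩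
  exact hpd.energyE_nonneg heven hK

theorem minEnergy_anti {D D' : Set (EuclideanSpace ℝ (Fin d))} (hD : D.Nonempty)
    (hsub : D ⊆ D') : minEnergy K D' ≤ minEnergy K D :=
  le_minEnergy hD fun _ _ h => hpd.minEnergy_le_energyE heven hK (h.mono fun _ hx => hsub hx)

variable [NeZero d]

-- Spreading `μ` along the axis does not increase its energy, and after a dilation by `c` the
-- projection of the spread measure to the axis fits into the segment.
theorem minEnergy_segmentSet_le [IsProbabilityMeasure μ] (hμ : ∀ᵐ x ∂μ, x ∈ tubeSet d R ρ)
    {c h : ℝ} (hc : 0 ≤ c) (hh : 0 < h) (hch : c * (R + h) ≤ R) {A : ℝ} (hA : 0 ≤ A)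
    {N : ℝ → ℝ} (hN0 : 0 ≤ N) (hN : Integrable N)
    (hKN : ∀ z : EuclideanSpace ℝ (Fin d), (∀ i ≠ 0, |z i| ≤ ρ) →
      K (EuclideanSpace.single 0 (c * z 0)) ≤ A * K z + N (z 0)) :
    minEnergy K (segmentSet d R) ≤ A * energyE K μ + h⁻¹ * ∫ u, N u := by
  have := isProbabilityMeasure_uniformSegment (d := d) hh
  set ν := μ ∗ uniformSegment d 0 h
  let proj : EuclideanSpace ℝ (Fin d) → EuclideanSpace ℝ (Fin d) :=
    fun x => EuclideanSpace.single 0 (c * x 0)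
  have hproj : Measurable proj := continuous_single_zero.measurable.comp (by fun_prop)
  have := Measure.isProbabilityMeasure_map (μ := ν) hproj.aemeasurable
  have hcarried : ∀ᵐ x ∂(ν.map proj), x ∈ segmentSet d R := by
    refine (ae_map_iff hproj.aemeasurable measurableSet_segmentSet).2 ?_
    filter_upwards [ae_conv_uniformSegment_apply_zero_mem hh hμ] with x hx
    exact single_zero_mem_segmentSet
      ⟨mul_nonneg hc hx.1, (mul_le_mul_of_nonneg_left hx.2 hc).trans hch⟩
  have hcross : ∀ᵐ p ∂(ν.prod ν), ∀ i ≠ 0, |(p.1 - p.2) i| ≤ ρ :=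
    have hmem (i : Fin d) (hi : i ≠ 0) := ae_conv_uniformSegment_apply_mem hh hμ hi
    ae_prod_forall_ne_zero_abs_sub_apply_le hmem hmem
  have hKint : Integrable (fun p => K (p.1 - p.2)) (ν.prod ν) :=
    hpd.integrable_comp heven hK (by fun_prop)
  have hNint : Integrable (fun p => N ((p.1 - p.2) 0)) (ν.prod ν) :=
    (integrable_axialDifference_conv_uniformSegment hh hN).comp_measurable (by fun_prop)
  calc minEnergy K (segmentSet d R)
      ≤ energyE K (ν.map proj) := hpd.minEnergy_le_energyE heven hK hcarried
    _ = ∫ p, K (EuclideanSpace.single 0 (c * (p.1 - p.2) 0)) ∂(ν.prod ν) := by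
      rw [← mutualEnergy_self, hpd.mutualEnergy_map_map heven hK hproj hproj]
      simp [proj, mul_sub, ← PiLp.single_sub]
    _ ≤ ∫ p, (A * K (p.1 - p.2) + N ((p.1 - p.2) 0)) ∂(ν.prod ν) :=
      integral_mono_ae
        (hpd.integrable_comp heven hK (continuous_single_zero.measurable.comp (by fun_prop)))
        ((hKint.const_mul A).add hNint) (hcross.mono fun p hp => hKN _ hp)
    _ = A * energyE K ν + ∫ u, N u ∂(axialDifference ν ν) := by
      rw [integral_add (hKint.const_mul A) hNint, integral_const_mul,
        ← hpd.mutualEnergy_eq_integral_prod heven hK, mutualEnergy_self, integral_axialDifference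
          (integrable_axialDifference_conv_uniformSegment hh hN).aestronglyMeasurable]
      rfl
    _ ≤ A * energyE K μ + h⁻¹ * ∫ u, N u := by
      gcongr
      · exact hpd.energyE_conv_le heven hK
      · simpa using integral_axialDifference_conv_uniformSegment_le hh hN0 hN

-- Against `μ` smeared over `[-2R,2R]`, the axial separation has constant density on `[-R,R]`.
theorem integral_le_energyE [IsProbabilityMeasure μ] (hR : 0 < R)
    (hμ : ∀ᵐ x ∂μ, x ∈ tubeSet d R ρ) {Q : ℝ → ℝ} (hQ : IntegrableOn Q (Set.Icc (-R) R))
    (hQK : ∀ z : EuclideanSpace ℝ (Fin d), (∀ i ≠ 0, |z i| ≤ ρ) → |z 0| ≤ R → Q (z 0) ≤ K z)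
    (hK0 : ∀ z : EuclideanSpace ℝ (Fin d), R < |z 0| → 0 ≤ K z) :
    (4 * R)⁻¹ * ∫ u in Set.Icc (-R) R, Q u ≤ energyE K μ := by
  have hab : -(2 * R) < 2 * R := by linarith
  have := isProbabilityMeasure_uniformSegment (d := d) hab
  set ν := μ ∗ uniformSegment d (-(2 * R)) (2 * R)
  have haxis : ∀ᵐ w ∂(axialDifference μ μ), |w| ≤ R := by
    have hmem : ∀ᵐ x ∂μ, x 0 ∈ Set.Icc 0 R := hμ.mono fun x hx => (mem_tubeSet_iff.1 hx).1
    rw [axialDifference, ae_map_iff (by fun_prop) (measurableSet_le (by fun_prop) (by fun_prop))]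
    exact ae_prod_abs_sub_apply_le hmem hmem
  have hcross : ∀ᵐ p ∂(μ.prod ν), ∀ i ≠ 0, |(p.1 - p.2) i| ≤ ρ :=
    ae_prod_forall_ne_zero_abs_sub_apply_le
      (fun i hi => hμ.mono fun x hx => (mem_tubeSet_iff.1 hx).2 i hi)
      fun i hi => ae_conv_uniformSegment_apply_mem hab hμ hi
  have hrestrict := restrict_axialDifference_conv_uniformSegment hR haxis
  have hQν : Integrable ((Set.Icc (-R) R).indicator Q) (axialDifference μ ν) := by
    rw [integrable_indicator_iff measurableSet_Icc, IntegrableOn, hrestrict]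
    exact hQ.smul_measure (by simpa using hR)
  calc (4 * R)⁻¹ * ∫ u in Set.Icc (-R) R, Q u
      = ∫ u, (Set.Icc (-R) R).indicator Q u ∂(axialDifference μ ν) := by
        rw [integral_indicator measurableSet_Icc, hrestrict, integral_smul_measure, smul_eq_mul,
          ENNReal.toReal_inv, ENNReal.toReal_ofReal (by positivity)]
    _ = ∫ p, (Set.Icc (-R) R).indicator Q ((p.1 - p.2) 0) ∂(μ.prod ν) :=
      integral_axialDifference hQν.aestronglyMeasurable
    _ ≤ ∫ p, K (p.1 - p.2) ∂(μ.prod ν) := by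
      refine integral_mono_ae (hQν.comp_measurable (by fun_prop))
        (hpd.integrable_comp heven hK (by fun_prop)) (hcross.mono fun p hp => ?_)
      refine Set.indicator_apply_le' (fun hmem => hQK _ hp (abs_le.2 hmem)) fun hmem => ?_
      exact hK0 _ (not_le.1 fun hle => hmem (abs_le.1 hle))
    _ ≤ energyE K μ := by
      rw [← hpd.mutualEnergy_eq_integral_prod heven hK]
      exact hpd.mutualEnergy_self_conv_le heven hK

end IsPosDefKernel

end MinimalEnergy

section RegularVariation

open Topology

-- The closed sets of shifts `u` with `|l (x + u) - l x| ≤ ε / 2` for all `x ≥ n` cover the line,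
-- so by Baire one of them contains an interval `[a, a + η]`.
theorem exists_eventually_abs_add_sub_le {l : ℝ → ℝ} (hl : Continuous l)
    (h : ∀ u, Tendsto (fun x => l (x + u) - l x) atTop (𝓝 0)) {ε : ℝ} (hε : 0 < ε) :
    ∃ η > 0, ∀ᶠ x in atTop, ∀ w ∈ Set.Icc 0 η, |l (x + w) - l x| ≤ ε := by
  let A (n : ℕ) : Set ℝ := {u | ∀ x ≥ (n : ℝ), |l (x + u) - l x| ≤ ε / 2}
  have hclosed (n : ℕ) : IsClosed (A n) := by
    simp only [A, Set.ofPred_forall]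
    exact isClosed_iInter fun x => isClosed_iInter fun _ =>
      isClosed_le (by fun_prop) continuous_const
  have hcover : ⋃ n, A n = Set.univ := by
    refine Set.eq_univ_of_forall fun u => ?_
    obtain ⟨X, hX⟩ := eventually_atTop.1
      ((h u).eventually (Metric.closedBall_mem_nhds 0 (half_pos hε)))
    obtain ⟨n, hn⟩ := exists_nat_ge X
    exact Set.mem_iUnion.2 ⟨n, fun x hx => by simpa using hX x (hn.trans hx)⟩
  obtain ⟨n, a, ha⟩ := nonempty_interior_of_iUnion_of_closed hclosed hcover
  obtain ⟨δ, hδ, hball⟩ := Metric.mem_nhds_iff.1 (mem_interior_iff_mem_nhds.1 ha)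
  refine ⟨δ / 2, half_pos hδ, ?_⟩
  filter_upwards [eventually_ge_atTop (n + a)] with x hx w ⟨hw0, hw⟩
  have haw : a + w ∈ A n := hball (by
    rw [Metric.mem_ball, Real.dist_eq, add_sub_cancel_left, abs_of_nonneg hw0]
    linarith)
  have hstart := interior_subset ha (x - a) (by linarith)
  have hend := haw (x - a) (by linarith)
  rw [← add_assoc, sub_add_cancel] at hend
  rw [sub_add_cancel] at hstart
  calc |l (x + w) - l x| = |(l (x + w) - l (x - a)) - (l x - l (x - a))| := by ring_nf
    _ ≤ ε := (abs_sub _ _).trans (by linarith)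

theorem exists_forall_ge_le_of_le_add_one {f : ℝ → ℝ} {X : ℝ} (hf : Continuous f)
    (h : ∀ x ≥ X, f x ≤ f (x + 1)) : ∃ m, ∀ x ≥ X, m ≤ f x := by
  obtain ⟨x₀, -, hmin⟩ := isCompact_Icc.exists_isMinOn
    (Set.nonempty_Icc.2 (le_add_of_nonneg_right zero_le_one)) (hf.continuousOn (s := Set.Icc X _))
  have hshift (n : ℕ) : ∀ x ≥ X, f x ≤ f (x + n) := by
    induction n with
    | zero => simp
    | succ n ih =>
      intro x hx
      rw [Nat.cast_succ, ← add_assoc]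
      exact (ih x hx).trans (h _ (le_add_of_le_of_nonneg hx n.cast_nonneg))
  refine ⟨f x₀, fun x hx => ?_⟩
  have hfloor := Nat.floor_le (sub_nonneg.2 hx)
  have hceil := (Nat.lt_floor_add_one (x - X)).le
  refine (hmin (a := x - ⌊x - X⌋₊) ⟨by linarith, by linarith⟩).trans ?_
  simpa using hshift ⌊x - X⌋₊ (x - ⌊x - X⌋₊) (by linarith)

namespace SlowlyVarying

variable {L : ℝ → ℝ} (hL : SlowlyVarying L)
include hL

theorem pos {x : ℝ} (hx : 0 < x) : 0 < L x :=
  hL.2.1 x hx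

theorem continuous_log_comp_exp : Continuous fun x => Real.log (L (Real.exp x)) :=
  (hL.1.comp_continuous Real.continuous_exp Real.exp_pos).log fun x => (hL.pos (Real.exp_pos x)).ne'

theorem tendsto_log_comp_exp_add_sub (u : ℝ) :
    Tendsto (fun x => Real.log (L (Real.exp (x + u))) - Real.log (L (Real.exp x))) atTop (𝓝 0) := by
  have hratio := (hL.2.2 (Real.exp u) (Real.exp_pos u)).comp Real.tendsto_exp_atTop
  have hlog := (Real.continuousAt_log one_ne_zero).tendsto.comp hratio
  rw [Real.log_one] at hlog
  refine hlog.congr fun x => ?_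
  simp only [Function.comp_apply]
  rw [← Real.exp_add, add_comm, Real.log_div (hL.pos (Real.exp_pos _)).ne'
    (hL.pos (Real.exp_pos _)).ne']

theorem exists_eventually_le_mul {A : ℝ} (hA : 1 < A) :
    ∃ s > 1, ∀ᶠ u in atTop, ∀ v ∈ Set.Icc u (s * u), L u ≤ A * L v := by
  have hA0 : 0 < A := zero_lt_one.trans hA
  obtain ⟨η, hη, h⟩ := exists_eventually_abs_add_sub_le hL.continuous_log_comp_exp
    hL.tendsto_log_comp_exp_add_sub (Real.log_pos hA)
  refine ⟨Real.exp η, Real.one_lt_exp_iff.2 hη, ?_⟩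
  filter_upwards [Real.tendsto_log_atTop.eventually h, eventually_gt_atTop 0]
    with u hu hu0 v ⟨huv, hv⟩
  have hv0 : 0 < v := hu0.trans_le huv
  have hlog_le : Real.log u ≤ Real.log v := Real.log_le_log hu0 huv
  have hle_log : Real.log v ≤ η + Real.log u := by
    rw [← Real.log_exp η, ← Real.log_mul (Real.exp_pos η).ne' hu0.ne']
    exact Real.log_le_log hv0 hv
  have hclose := hu (Real.log v - Real.log u) ⟨by linarith, by linarith⟩
  rw [add_sub_cancel, Real.exp_log hu0, Real.exp_log hv0] at hclose
  rw [← Real.log_le_log_iff (hL.pos hu0) (mul_pos hA0 (hL.pos hv0)),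
    Real.log_mul hA0.ne' (hL.pos hv0).ne']
  linarith [(abs_le.1 hclose).1]

theorem exists_eventually_mul_rpow_le {ε : ℝ} (hε : 0 < ε) :
    ∃ b > 0, ∀ᶠ u in atTop, b * u ^ (-ε) ≤ L u := by
  let f (x : ℝ) : ℝ := Real.log (L (Real.exp x)) + ε * x
  have hf : Continuous f := hL.continuous_log_comp_exp.add (by fun_prop)
  obtain ⟨X, hX⟩ := eventually_atTop.1
    ((hL.tendsto_log_comp_exp_add_sub 1).eventually (lt_mem_nhds (neg_lt_zero.2 hε)))
  obtain ⟨m, hm⟩ := exists_forall_ge_le_of_le_add_one hf fun x hx => by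
    simp only [f]
    linarith [hX x hx]
  refine ⟨Real.exp m, Real.exp_pos m, ?_⟩
  filter_upwards [Real.tendsto_log_atTop.eventually_ge_atTop X, eventually_gt_atTop 0]
    with u hu hu0
  have hmu := hm _ hu
  simp only [f, Real.exp_log hu0] at hmu
  rw [Real.rpow_def_of_pos hu0, ← Real.exp_add, ← Real.le_log_iff_exp_le (hL.pos hu0)]
  linarith

end SlowlyVarying

theorem rpow_neg_le_rpow_abs_mul_rpow_neg {u v s : ℝ} (hu : 0 < u) (huv : u ≤ v) (hv : v ≤ s * u)
    (α : ℝ) : u ^ (-α) ≤ s ^ |α| * v ^ (-α) := by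
  have hv0 : 0 < v := hu.trans_le huv
  calc u ^ (-α) = (v / u) ^ α * v ^ (-α) := by
        rw [Real.div_rpow hv0.le hu.le, Real.rpow_neg hu.le, Real.rpow_neg hv0.le]
        field_simp [(Real.rpow_pos_of_pos hv0 α).ne']
    _ ≤ (v / u) ^ |α| * v ^ (-α) := by
        gcongr
        · exact (one_le_div hu).2 huv
        · exact le_abs_self α
    _ ≤ s ^ |α| * v ^ (-α) := by
        gcongr
        exact (div_le_iff₀ hu).2 hv

namespace RegularlyVarying

variable {k : ℝ → ℝ} {α : ℝ} (hk : RegularlyVarying k α)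
include hk

theorem exists_eventually_between {A : ℝ} (hA : 1 < A) :
    ∃ L, SlowlyVarying L ∧
      ∀ᶠ u in atTop, u ^ (-α) * L u ≤ A * k u ∧ k u ≤ A * (u ^ (-α) * L u) := by
  have hA0 : 0 < A := zero_lt_one.trans hA
  obtain ⟨-, L, hL, hlim⟩ := hk
  refine ⟨L, hL, ?_⟩
  filter_upwards [hlim.eventually_const_le (inv_lt_one_of_one_lt₀ hA), hlim.eventually_le_const hA,
    eventually_gt_atTop 0] with u hlow hupp hu
  have hpos : 0 < u ^ (-α) * L u := mul_pos (Real.rpow_pos_of_pos hu _) (hL.pos hu)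
  rw [le_div_iff₀ hpos, inv_mul_le_iff₀ hA0] at hlow
  exact ⟨hlow, (div_le_iff₀ hpos).1 hupp⟩

theorem eventually_pos : ∀ᶠ u in atTop, 0 < k u := by
  obtain ⟨L, hL, h⟩ := hk.exists_eventually_between one_lt_two
  filter_upwards [h, eventually_gt_atTop 0] with u hu hu0
  linarith [mul_pos (Real.rpow_pos_of_pos hu0 (-α)) (hL.pos hu0)]

theorem exists_eventually_le_mul {A : ℝ} (hA : 1 < A) :
    ∃ s > 1, ∀ᶠ u in atTop, ∀ v ∈ Set.Icc u (s * u), k u ≤ A * k v := by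
  have hA0 : 0 < A := zero_lt_one.trans hA
  set B := A ^ (1 / 4 : ℝ)
  have hB : 1 < B := Real.one_lt_rpow hA (by norm_num)
  have hB4 : B ^ 4 = A := by
    rw [← Real.rpow_natCast, ← Real.rpow_mul hA0.le]
    norm_num
  obtain ⟨L, hL, hkL⟩ := hk.exists_eventually_between hB
  obtain ⟨s, hs, hLs⟩ := hL.exists_eventually_le_mul hB
  have hpow : Tendsto (fun t : ℝ => t ^ |α|) (𝓝[>] 1) (𝓝 1) := by
    simpa using ((Real.continuousAt_rpow_const 1 |α| (.inl one_ne_zero)).tendsto).mono_left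
      nhdsWithin_le_nhds
  obtain ⟨t, htB, hts, ht : 1 < t⟩ := ((hpow.eventually_le_const hB).and
    ((eventually_nhdsWithin_of_eventually_nhds (eventually_le_nhds hs)).and
      self_mem_nhdsWithin)).exists
  refine ⟨t, ht, ?_⟩
  filter_upwards [eventually_forall_ge_atTop.2 hkL, hLs, eventually_gt_atTop 0]
    with u hku hLu hu v ⟨huv, hv⟩
  have hL_le : L u ≤ B * L v := hLu v ⟨huv, hv.trans (by gcongr)⟩
  have hLu0 : 0 ≤ L u := (hL.pos hu).le
  have hLv0 : 0 ≤ L v := (hL.pos (hu.trans_le huv)).le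
  have hv0 : 0 ≤ v := hu.le.trans huv
  calc k u ≤ B * (u ^ (-α) * L u) := (hku u le_rfl).2
    _ ≤ B * ((t ^ |α| * v ^ (-α)) * (B * L v)) := by
      gcongr
      exact rpow_neg_le_rpow_abs_mul_rpow_neg hu huv hv α
    _ ≤ B * ((B * v ^ (-α)) * (B * L v)) := by gcongr
    _ = B ^ 3 * (v ^ (-α) * L v) := by ring
    _ ≤ B ^ 3 * (B * k v) := mul_le_mul_of_nonneg_left (hku v huv).1 (by positivity)
    _ = A * k v := by rw [← hB4]; ring

theorem exists_eventually_dilate_le_mul {A : ℝ} (hA : 1 < A) :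
    ∃ s > 1, ∀ᶠ u in atTop, ∀ v ∈ Set.Icc u (s * u),
      |k (s⁻¹ * u)| ≤ A * k v ∧ |k u| ≤ A * k v := by
  obtain ⟨t, ht, h⟩ := hk.exists_eventually_le_mul hA
  obtain ⟨s, hs : 1 < s, rfl⟩ : ∃ s > 1, s * s = t :=
    ⟨√t, by rwa [gt_iff_lt, Real.lt_sqrt zero_le_one, one_pow], Real.mul_self_sqrt (by linarith)⟩
  have hs0 : 0 < s := zero_lt_one.trans hs
  refine ⟨s, hs, ?_⟩
  filter_upwards [h.and hk.eventually_pos, (tendsto_id.const_mul_atTop (inv_pos.2 hs0)).eventually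
    (h.and hk.eventually_pos), eventually_gt_atTop 0]
    with u ⟨hu, hku⟩ ⟨hsu, hksu⟩ hu0 v ⟨huv, hv⟩
  rw [id_eq] at hksu hsu
  rw [abs_of_pos hku, abs_of_pos hksu]
  refine ⟨hsu v ⟨?_, ?_⟩, hu v ⟨huv, hv.trans ?_⟩⟩
  · exact (mul_le_of_le_one_left hu0.le (inv_le_one_of_one_le₀ hs.le)).trans huv
  · rwa [mul_assoc, mul_inv_cancel_left₀ hs0.ne']
  · gcongr
    exact le_mul_of_one_le_left hs0.le hs.le

theorem exists_eventually_mul_rpow_le {β : ℝ} (hβ : α < β) :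
    ∃ b > 0, ∀ᶠ u in atTop, b * u ^ (-β) ≤ k u := by
  obtain ⟨L, hL, hkL⟩ := hk.exists_eventually_between one_lt_two
  obtain ⟨b, hb, hbL⟩ := hL.exists_eventually_mul_rpow_le (sub_pos.2 hβ)
  refine ⟨b / 2, half_pos hb, ?_⟩
  filter_upwards [hkL, hbL, eventually_gt_atTop 0] with u hku hLu hu
  have : b * u ^ (-β) ≤ 2 * k u := calc
    b * u ^ (-β) = u ^ (-α) * (b * u ^ (-(β - α))) := by
      rw [mul_left_comm, ← Real.rpow_add hu]
      ring_nf
    _ ≤ u ^ (-α) * L u := by gcongr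
    _ ≤ 2 * k u := hku.1
  linarith

end RegularlyVarying

end RegularVariation

section ProfileIntegral

open Asymptotics

/-- The integral of `|k|` over `[0,x]`. For the kernel with radial profile `k`, the energies on a
thin tube of length `R` are at least of the order of `profileIntegral k R / R`. -/
noncomputable def profileIntegral (k : ℝ → ℝ) (x : ℝ) : ℝ :=
  ∫ t in 0..x, |k t|

theorem profileIntegral_nonneg (k : ℝ → ℝ) {x : ℝ} (hx : 0 ≤ x) : 0 ≤ profileIntegral k x :=
  intervalIntegral.integral_nonneg hx fun _ _ => abs_nonneg _

section Growth

variable {k : ℝ → ℝ} (hk : ContinuousOn k (Set.Ici 0))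
include hk

theorem intervalIntegrable_abs_of_nonneg {a b : ℝ} (ha : 0 ≤ a) (hb : 0 ≤ b) :
    IntervalIntegrable (fun t => |k t|) volume a b :=
  (hk.abs.mono fun _ ht => (le_min ha hb).trans ht.1).intervalIntegrable

theorem profileIntegral_add_integral {a b : ℝ} (ha : 0 ≤ a) (hb : 0 ≤ b) :
    profileIntegral k a + ∫ t in a..b, |k t| = profileIntegral k b :=
  intervalIntegral.integral_add_adjacent_intervals
    (intervalIntegrable_abs_of_nonneg hk le_rfl ha) (intervalIntegrable_abs_of_nonneg hk ha hb)

theorem profileIntegral_mono {a b : ℝ} (ha : 0 ≤ a) (hab : a ≤ b) :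
    profileIntegral k a ≤ profileIntegral k b := by
  rw [← profileIntegral_add_integral hk ha (ha.trans hab)]
  exact le_add_of_nonneg_right
    (intervalIntegral.integral_nonneg hab fun _ _ => abs_nonneg _)

theorem profileIntegral_pos {a b : ℝ} (ha : 0 ≤ a) (hab : a < b) (h : ∀ t > a, 0 < k t) :
    0 < profileIntegral k b := by
  have hb : 0 ≤ b := ha.trans hab.le
  rw [← profileIntegral_add_integral hk ha hb]
  exact add_pos_of_nonneg_of_pos (profileIntegral_nonneg k ha)
    (intervalIntegral.intervalIntegral_pos_of_pos_on (intervalIntegrable_abs_of_nonneg hk ha hb)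
      (fun t ht => abs_pos.2 (h t ht.1).ne') hab)

theorem profileIntegral_le_mul {B : ℝ} (hB : ∀ t ≥ 0, |k t| ≤ B) {x : ℝ} (hx : 0 ≤ x) :
    profileIntegral k x ≤ B * x := by
  refine (intervalIntegral.integral_mono_on hx (intervalIntegrable_abs_of_nonneg hk le_rfl hx)
    intervalIntegrable_const fun t ht => hB t ht.1).trans_eq ?_
  simp [mul_comm]

theorem profileIntegral_isBigO {F F' : ℝ → ℝ} (hF : ∀ᶠ x in atTop, HasDerivAt F (F' x) x)
    (hF' : ∀ᶠ x in atTop, 0 ≤ F' x) (hFtop : Tendsto F atTop atTop) (h : k =O[atTop] F') :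
    profileIntegral k =O[atTop] F := by
  obtain ⟨C, hkF⟩ := h.isBigOWith
  obtain ⟨x₀, hx₀⟩ := eventually_atTop.1 (hF.and (hF'.and (hkF.bound.and (eventually_ge_atTop 0))))
  have h0 : 0 ≤ x₀ := (hx₀ x₀ le_rfl).2.2.2
  refine .of_bound (C + 1) ?_
  filter_upwards [eventually_ge_atTop x₀, hFtop.eventually_ge_atTop 0,
    hFtop.eventually_ge_atTop (profileIntegral k x₀ - C * F x₀)] with x hx hFx hlarge
  have hcont : ContinuousOn F (Set.Icc x₀ x) := fun t ht =>
    (hx₀ t ht.1).1.continuousAt.continuousWithinAt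
  have hint : ∫ t in x₀..x, |k t| ≤ C * F x - C * F x₀ := by
    refine intervalIntegral.integral_le_sub_of_hasDeriv_right_of_le hx (hcont.const_smul C)
      (fun t ht => ((hx₀ t ht.1.le).1.const_mul C).hasDerivWithinAt)
      ((intervalIntegrable_iff_integrableOn_Icc_of_le hx).1
        (intervalIntegrable_abs_of_nonneg hk h0 (h0.trans hx))) fun t ht => ?_
    obtain ⟨-, hF't, hkt, -⟩ := hx₀ t ht.1.le
    rwa [Real.norm_eq_abs, Real.norm_of_nonneg hF't] at hkt
  rw [Real.norm_of_nonneg (profileIntegral_nonneg k (h0.trans hx)), Real.norm_of_nonneg hFx,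
    ← profileIntegral_add_integral hk h0 (h0.trans hx)]
  linarith

theorem isBigO_profileIntegral {F F' : ℝ → ℝ} (hF : ∀ᶠ x in atTop, HasDerivAt F (F' x) x)
    (hFtop : Tendsto F atTop atTop) (h : F' =O[atTop] k) : F =O[atTop] profileIntegral k := by
  obtain ⟨C, hC, hFk⟩ := h.exists_pos
  obtain ⟨x₀, hx₀⟩ := eventually_atTop.1 (hF.and (hFk.bound.and (eventually_ge_atTop 0)))
  have h0 : 0 ≤ x₀ := (hx₀ x₀ le_rfl).2.2
  refine .of_bound (2 * C) ?_
  filter_upwards [eventually_ge_atTop x₀, hFtop.eventually_ge_atTop 0,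
    hFtop.eventually_ge_atTop (2 * F x₀)] with x hx hFx hlarge
  have hcont : ContinuousOn F (Set.Icc x₀ x) := fun t ht =>
    (hx₀ t ht.1).1.continuousAt.continuousWithinAt
  have hint : F x - F x₀ ≤ ∫ t in x₀..x, C * |k t| :=
    intervalIntegral.sub_le_integral_of_hasDeriv_right_of_le hx hcont
      (fun t ht => (hx₀ t ht.1.le).1.hasDerivWithinAt)
      ((intervalIntegrable_iff_integrableOn_Icc_of_le hx).1
        ((intervalIntegrable_abs_of_nonneg hk h0 (h0.trans hx)).const_mul C))
      fun t ht => (le_abs_self _).trans (hx₀ t ht.1.le).2.1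
  rw [intervalIntegral.integral_const_mul] at hint
  rw [Real.norm_of_nonneg (profileIntegral_nonneg k (h0.trans hx)), Real.norm_of_nonneg hFx,
    ← profileIntegral_add_integral hk h0 (h0.trans hx)]
  linarith [mul_nonneg hC.le (profileIntegral_nonneg k h0)]

theorem profileIntegral_comp_add_const_isLittleO {b : ℝ} (hb0 : 0 ≤ b)
    (hb : 0 < profileIntegral k b) {T : ℝ → ℝ} (hT : ∀ R, b ≤ T R)
    (h : (fun R => profileIntegral k (T R)) =o[atTop] profileIntegral k) (C : ℝ) :
    (fun R => profileIntegral k (T R) + C) =o[atTop] profileIntegral k := by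
  refine h.add (IsBigO.trans_isLittleO (.of_bound (‖C‖ / profileIntegral k b) ?_) h)
  refine .of_forall fun R => ?_
  have hmono := (profileIntegral_mono hk hb0 (hT R)).trans (le_abs_self _)
  calc ‖C‖ = ‖C‖ / profileIntegral k b * profileIntegral k b := (div_mul_cancel₀ _ hb.ne').symm
    _ ≤ ‖C‖ / profileIntegral k b * ‖profileIntegral k (T R)‖ := by gcongr; exact hmono

theorem RegularlyVarying.isLittleO_profileIntegral_comp {α : ℝ} (hrv : RegularlyVarying k α)
    (hα : α < 1) {B : ℝ} (hB : ∀ t ≥ 0, |k t| ≤ B) {T : ℝ → ℝ} (hT : ∀ R, 0 ≤ T R)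
    (hTsmall : ∀ δ : ℝ, 0 < δ → T =o[atTop] fun R => R ^ δ) :
    (fun R => profileIntegral k (T R)) =o[atTop] profileIntegral k := by
  obtain ⟨β, hαβ, hβ⟩ := exists_between hα
  have hδ : 0 < 1 - β := sub_pos.2 hβ
  obtain ⟨b, hb, hkb⟩ := hrv.exists_eventually_mul_rpow_le hαβ
  have hkβ : (fun u => (1 - β) * u ^ (1 - β - 1)) =O[atTop] k := by
    refine (IsBigO.of_bound b⁻¹ ?_).const_mul_left (1 - β)
    filter_upwards [hkb, eventually_gt_atTop 0] with u hu hu0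
    have hpow := Real.rpow_pos_of_pos hu0 (-β)
    rw [sub_sub_cancel_left, Real.norm_of_nonneg hpow.le, le_inv_mul_iff₀ hb]
    exact hu.trans (le_abs_self _)
  have hlow : (fun R : ℝ => R ^ (1 - β)) =O[atTop] profileIntegral k :=
    isBigO_profileIntegral hk ((eventually_ne_atTop 0).mono fun u hu =>
      Real.hasDerivAt_rpow_const (.inl hu)) (tendsto_rpow_atTop hδ) hkβ
  have hupp : (fun R => profileIntegral k (T R)) =O[atTop] T := by
    refine .of_bound B (.of_forall fun R => ?_)
    rw [Real.norm_of_nonneg (profileIntegral_nonneg k (hT R)), Real.norm_of_nonneg (hT R)]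
    exact profileIntegral_le_mul hk hB (hT R)
  exact hupp.trans_isLittleO ((hTsmall (1 - β) hδ).trans_isBigO hlow)

theorem profileIntegral_isTheta_log_rpow {γ : ℝ} (hγ : γ < 1)
    (hcrit : Tendsto (fun x => k x / (x⁻¹ * Real.log x ^ (-γ))) atTop (nhds 1)) :
    profileIntegral k =Θ[atTop] fun x => Real.log x ^ (1 - γ) := by
  have hp : 0 < 1 - γ := sub_pos.2 hγ
  have hkf := isEquivalent_of_tendsto_one hcrit
  let F (x : ℝ) : ℝ := Real.log x ^ (1 - γ) / (1 - γ)
  have hF : ∀ᶠ x in atTop, HasDerivAt F (x⁻¹ * Real.log x ^ (-γ)) x := by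
    filter_upwards [eventually_gt_atTop 1] with x hx
    have hlog := (Real.hasDerivAt_log (by linarith)).rpow_const (p := 1 - γ)
      (.inl (Real.log_pos hx).ne')
    refine (hlog.div_const (1 - γ)).congr_deriv ?_
    rw [sub_sub_cancel_left]
    field_simp
  have hF' : ∀ᶠ x in atTop, 0 ≤ x⁻¹ * Real.log x ^ (-γ) := by
    filter_upwards [eventually_ge_atTop 1] with x hx
    have := Real.log_nonneg hx
    positivity
  have hFtop : Tendsto F atTop atTop :=
    ((tendsto_rpow_atTop hp).comp Real.tendsto_log_atTop).atTop_div_const hp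
  have hFlog : F =Θ[atTop] fun x => Real.log x ^ (1 - γ) := by
    simpa only [F, div_eq_inv_mul] using
      (isTheta_const_mul_left (inv_ne_zero hp.ne')).2 (isTheta_refl _ _)
  have hF_profile : profileIntegral k =Θ[atTop] F :=
    ⟨profileIntegral_isBigO hk hF hF' hFtop hkf.isBigO,
      isBigO_profileIntegral hk hF hFtop hkf.isBigO_symm⟩
  exact hF_profile.trans hFlog

theorem isLittleO_profileIntegral_comp_of_isTheta_log_rpow {p : ℝ} (hp : 0 < p)
    (hlog : profileIntegral k =Θ[atTop] fun x => Real.log x ^ p) {T : ℝ → ℝ}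
    (hT : ∀ R, 0 ≤ T R) (hTsmall : (fun R => Real.log (T R)) =o[atTop] Real.log) :
    (fun R => profileIntegral k (T R)) =o[atTop] profileIntegral k := by
  obtain ⟨C, hC⟩ := hlog.1.isBigOWith
  obtain ⟨x₀, hx₀⟩ := eventually_atTop.1 hC.bound
  have hlogT : (fun R => Real.log (max (T R) x₀)) =o[atTop] Real.log := by
    have hconst := Real.isLittleO_const_log_atTop (c := Real.log x₀)
    refine (IsBigO.of_norm_le fun R => ?_).trans_isLittleO
      (hTsmall.norm_left.add hconst.norm_left)
    rcases max_choice (T R) x₀ with h | h <;> simp [h]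
  have hcomp : (fun R => profileIntegral k (T R)) =O[atTop]
      fun R => Real.log (max (T R) x₀) ^ p := by
    refine .of_bound C (.of_forall fun R => ?_)
    rw [Real.norm_of_nonneg (profileIntegral_nonneg k (hT R))]
    exact (profileIntegral_mono hk (hT R) (le_max_left _ _)).trans
      ((le_abs_self _).trans (hx₀ _ (le_max_right _ _)))
  exact hcomp.trans_isLittleO ((hlogT.rpow hp
    (Real.tendsto_log_atTop.eventually_ge_atTop 0)).trans_isBigO hlog.2)

end Growth

theorem isLittleO_rpow_of_log_isLittleO {f : ℝ → ℝ} (hf : ∀ R, 0 ≤ f R)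
    (h : (fun R => Real.log (f R)) =o[atTop] Real.log) {δ : ℝ} (hδ : 0 < δ) :
    f =o[atTop] fun R => R ^ δ := by
  have hgap : Tendsto (fun R => δ * Real.log R - Real.log (f R)) atTop atTop := by
    have hlog : Real.log =O[atTop] fun R => δ * Real.log R := isBigO_self_const_mul hδ.ne' _ _
    exact (IsEquivalent.refl.sub_isLittleO (h.trans_isBigO hlog)).symm.tendsto_atTop
      (Real.tendsto_log_atTop.const_mul_atTop hδ)
  have hexp := Real.isLittleO_exp_comp_exp_comp.2 hgap
  refine (IsBigO.of_norm_le fun R => ?_).trans_isLittleO (hexp.congr' .rfl ?_)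
  · rw [Real.norm_of_nonneg (hf R)]
    exact Real.le_exp_log _
  · filter_upwards [eventually_gt_atTop 0] with R hR
    rw [Real.rpow_def_of_pos hR, mul_comm]

theorem log_mul_one_add_isLittleO_log {r : ℝ → ℝ} (hr : ∀ R, 0 ≤ r R)
    (hro : Tendsto (fun R => Real.log (max (r R) 2) / Real.log R) atTop (nhds 0)) {b : ℝ}
    (hb : 0 < b) : (fun R => Real.log (b * (1 + r R))) =o[atTop] Real.log := by
  have hmax : (fun R => Real.log (max (r R) 2)) =o[atTop] Real.log :=
    (isLittleO_iff_tendsto' ((eventually_gt_atTop 1).mono fun R hR h =>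
      absurd h (Real.log_pos hR).ne')).2 hro
  have hone_add : (fun R => Real.log (1 + r R)) =O[atTop] fun R => Real.log (max (r R) 2) := by
    refine .of_bound 2 (.of_forall fun R => ?_)
    have hr0 := hr R
    have hm := le_max_right (r R) 2
    have hle := le_max_left (r R) 2
    rw [Real.norm_of_nonneg (Real.log_nonneg (by linarith)),
      Real.norm_of_nonneg (Real.log_nonneg (by linarith))]
    calc Real.log (1 + r R) ≤ Real.log (max (r R) 2 ^ 2) :=
          Real.log_le_log (by linarith) (by nlinarith)
      _ = 2 * Real.log (max (r R) 2) := by rw [Real.log_pow, Nat.cast_two]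
  have hconst := Real.isLittleO_const_log_atTop (c := Real.log b)
  refine (hconst.add (hone_add.trans_isLittleO hmax)).congr_left fun R => ?_
  rw [← Real.log_mul hb.ne' (by linarith [hr R])]

theorem RegularlyVarying.isLittleO_profileIntegral_mul_one_add {k : ℝ → ℝ} {α B : ℝ}
    (hrv : RegularlyVarying k α) (hk : ContinuousOn k (Set.Ici 0)) (hB : ∀ t ≥ 0, |k t| ≤ B)
    (hα : α ≤ 1) (hcrit : α = 1 → ∃ γ : ℝ, γ < 1 ∧
      Tendsto (fun x => k x / (x⁻¹ * Real.log x ^ (-γ))) atTop (nhds 1))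
    {r : ℝ → ℝ} (hr : ∀ R, 0 ≤ r R)
    (hro : Tendsto (fun R => Real.log (max (r R) 2) / Real.log R) atTop (nhds 0)) {b : ℝ}
    (hb : 0 < b) :
    (fun R => profileIntegral k (b * (1 + r R))) =o[atTop] profileIntegral k := by
  have hT (R : ℝ) : 0 ≤ b * (1 + r R) := mul_nonneg hb.le (by linarith [hr R])
  have hlog := log_mul_one_add_isLittleO_log hr hro hb
  rcases hα.lt_or_eq with hα | hα
  · exact hrv.isLittleO_profileIntegral_comp hk hα hB hT fun δ hδ =>
      isLittleO_rpow_of_log_isLittleO hT hlog hδ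
  · obtain ⟨γ, hγ, hγlim⟩ := hcrit hα
    exact isLittleO_profileIntegral_comp_of_isTheta_log_rpow hk (sub_pos.2 hγ)
      (profileIntegral_isTheta_log_rpow hk hγ hγlim) hT hlog

end ProfileIntegral

section Comparison

open Asymptotics

theorem norm_le_abs_apply_zero_add {d : ℕ} [NeZero d] {z : EuclideanSpace ℝ (Fin d)} {ρ : ℝ}
    (hz : ∀ i ≠ 0, |z i| ≤ ρ) : ‖z‖ ≤ |z 0| + (d - 1) * ρ := by
  have hsum : z = ∑ i, EuclideanSpace.single i (z i) := by
    ext j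
    simp [Pi.single_apply]
  have hcard : ((Finset.univ.erase (0 : Fin d)).card : ℝ) = d - 1 := by
    rw [Finset.card_erase_of_mem (Finset.mem_univ _), Finset.card_univ, Fintype.card_fin,
      Nat.cast_pred (NeZero.pos d)]
  calc ‖z‖ ≤ ∑ i, |z i| := by
        conv_lhs => rw [hsum]
        exact (norm_sum_le _ _).trans_eq (by simp)
    _ = |z 0| + ∑ i ∈ Finset.univ.erase 0, |z i| :=
      (Finset.add_sum_erase _ _ (Finset.mem_univ 0)).symm
    _ ≤ |z 0| + (d - 1) * ρ := by
      rw [← hcard, ← nsmul_eq_mul]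
      gcongr
      exact Finset.sum_le_card_nsmul _ _ _ fun i hi => hz i (Finset.ne_of_mem_erase hi)

theorem setIntegral_Icc_neg_comp_abs {f : ℝ → ℝ} {T : ℝ} (hT : 0 ≤ T) :
    ∫ u in Set.Icc (-T) T, f |u| = 2 * ∫ t in 0..T, f t := by
  have habs : (Set.Icc (-T) T).indicator (fun u => f |u|) =
      fun u => (Set.Iic T).indicator f |u| := by
    ext u
    simp only [Set.indicator, Set.mem_Icc, Set.mem_Iic, abs_le]
  rw [← integral_indicator measurableSet_Icc, habs, integral_comp_abs,
    setIntegral_indicator measurableSet_Iic, Set.Ioi_inter_Iic, intervalIntegral.integral_of_le hT]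

/-- A bound, in terms of the axial separation `u`, for the failure of the regular variation of `k`
at short range: the dilated profile `|k (c * |u|)|` for `|u| ≤ T`, plus the constant `B` for
`|u| ≤ X`. -/
noncomputable def nearField (k : ℝ → ℝ) (c T B X u : ℝ) : ℝ :=
  (Set.Icc (-T) T).indicator (fun u => |k (c * |u|)|) u + (Set.Icc (-X) X).indicator (fun _ => B) u

section NearField

variable {k : ℝ → ℝ} {c T B X : ℝ}

theorem nearField_nonneg (hB : 0 ≤ B) : 0 ≤ nearField k c T B X := fun u =>
  add_nonneg (Set.indicator_nonneg (fun _ _ => abs_nonneg _) u)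
    (Set.indicator_nonneg (fun _ _ => hB) u)

theorem continuous_abs_comp_mul_abs (hk : ContinuousOn k (Set.Ici 0)) (hc : 0 ≤ c) :
    Continuous fun u => |k (c * |u|)| :=
  (hk.comp_continuous (by fun_prop) fun u => mul_nonneg hc (abs_nonneg u)).abs

theorem integrable_nearField (hk : ContinuousOn k (Set.Ici 0)) (hc : 0 ≤ c) :
    Integrable (nearField k c T B X) :=
  ((continuous_abs_comp_mul_abs hk hc).integrableOn_Icc.integrable_indicator measurableSet_Icc).add
    (continuous_const.integrableOn_Icc.integrable_indicator measurableSet_Icc)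

theorem integral_nearField_le (hk : ContinuousOn k (Set.Ici 0)) (hc : 0 < c) (hc1 : c ≤ 1)
    (hT : 0 ≤ T) (hB : 0 ≤ B) (hX : 0 ≤ X) :
    ∫ u, nearField k c T B X u ≤ 2 * c⁻¹ * (profileIntegral k T + X * B) := by
  have hprofile : ∫ t in 0..T, |k (c * t)| = c⁻¹ * profileIntegral k (c * T) := by
    rw [intervalIntegral.integral_comp_mul_left (fun t => |k t|) hc.ne', mul_zero, smul_eq_mul,
      profileIntegral]
  have hdilate : profileIntegral k (c * T) ≤ profileIntegral k T :=
    profileIntegral_mono hk (mul_nonneg hc.le hT) (mul_le_of_le_one_left hT hc1)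
  have hconst : X * B ≤ c⁻¹ * (X * B) :=
    le_mul_of_one_le_left (mul_nonneg hX hB) ((one_le_inv₀ hc).2 hc1)
  calc ∫ u, nearField k c T B X u
      = 2 * (c⁻¹ * profileIntegral k (c * T)) + 2 * (X * B) := by
        have hdilated : IntegrableOn (fun u => |k (c * |u|)|) (Set.Icc (-T) T) :=
          (continuous_abs_comp_mul_abs hk hc.le).integrableOn_Icc
        have hconst : IntegrableOn (fun _ => B) (Set.Icc (-X) X) :=
          continuous_const.integrableOn_Icc
        simp only [nearField]
        rw [integral_add (hdilated.integrable_indicator measurableSet_Icc)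
            (hconst.integrable_indicator measurableSet_Icc),
          integral_indicator measurableSet_Icc, integral_indicator measurableSet_Icc,
          setIntegral_Icc_neg_comp_abs (f := fun t => |k (c * t)|) hT,
          setIntegral_Icc_neg_comp_abs (f := fun _ => B) hX, hprofile]
        simp
    _ ≤ 2 * (c⁻¹ * profileIntegral k T) + 2 * (c⁻¹ * (X * B)) := by gcongr
    _ = 2 * c⁻¹ * (profileIntegral k T + X * B) := by ring

end NearField

section Radial

variable {d : ℕ} {K : EuclideanSpace ℝ (Fin d) → ℝ} {k : ℝ → ℝ} (hrad : ∀ x, K x = k ‖x‖)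
include hrad

theorem even_of_radial : K.Even := fun x => by rw [hrad, hrad, norm_neg]

variable [NeZero d]

theorem apply_single_zero_of_radial (t : ℝ) : K (EuclideanSpace.single 0 t) = k |t| := by
  rw [hrad, PiLp.norm_single, Real.norm_eq_abs]

theorem apply_eq_of_radial {t : ℝ} (ht : 0 ≤ t) : k t = K (EuclideanSpace.single 0 t) := by
  rw [apply_single_zero_of_radial hrad, abs_of_nonneg ht]

theorem continuousOn_profile_of_radial (hcont : Continuous K) : ContinuousOn k (Set.Ici 0) := by
  refine (hcont.comp continuous_single_zero).continuousOn.congr fun t ht => ?_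
  exact apply_eq_of_radial hrad ht

end Radial

namespace IsPosDefKernel

variable {d : ℕ} [NeZero d] {K : EuclideanSpace ℝ (Fin d) → ℝ} {k : ℝ → ℝ}
  (hpd : IsPosDefKernel K) (hrad : ∀ x, K x = k ‖x‖)
  {μ : Measure (EuclideanSpace ℝ (Fin d))} {A R X T s ρ : ℝ}
include hpd hrad

theorem abs_profile_le {t : ℝ} (ht : 0 ≤ t) : |k t| ≤ K 0 := by
  rw [apply_eq_of_radial hrad ht]
  exact hpd.abs_le_apply_zero (even_of_radial hrad) _

theorem apply_zero_nonneg : 0 ≤ K 0 :=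
  (abs_nonneg _).trans (hpd.abs_profile_le hrad le_rfl)

theorem abs_profile_mul_le_add_nearField {c : ℝ} (hA : 0 < A) (hs : 1 ≤ s)
    (hpos : ∀ u ≥ X, 0 < k u) (hfar : ∀ u ≥ T, ∀ v ∈ Set.Icc u (s * u), |k (c * u)| ≤ A * k v)
    (hρ : (d - 1) * ρ ≤ (s - 1) * T) {z : EuclideanSpace ℝ (Fin d)} (hz : ∀ i ≠ 0, |z i| ≤ ρ) :
    |k (c * |z 0|)| ≤ A * K z + nearField k c T (A * K 0) X (z 0) := by
  have hle : |z 0| ≤ ‖z‖ := PiLp.norm_apply_le z 0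
  have hK0 := hpd.apply_zero_nonneg hrad
  by_cases hzT : T ≤ |z 0|
  · have hnorm : ‖z‖ ≤ s * |z 0| := by
      nlinarith [norm_le_abs_apply_zero_add hz, mul_le_mul_of_nonneg_left hzT (sub_nonneg.2 hs)]
    rw [hrad z]
    exact le_add_of_le_of_nonneg (hfar _ hzT _ ⟨hle, hnorm⟩)
      (nearField_nonneg (mul_nonneg hA.le hK0) _)
  have hcore : 0 ≤ A * K z + (Set.Icc (-X) X).indicator (fun _ => A * K 0) (z 0) := by
    by_cases hzX : z 0 ∈ Set.Icc (-X) X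
    · rw [Set.indicator_of_mem hzX, ← mul_add]
      have habs := (abs_le.1 (hpd.abs_le_apply_zero (even_of_radial hrad) z)).1
      exact mul_nonneg hA.le (by linarith)
    · have hX : X < |z 0| := not_le.1 fun h => hzX (abs_le.1 h)
      rw [Set.indicator_of_notMem hzX, add_zero, hrad]
      exact mul_nonneg hA.le (hpos _ (hX.le.trans hle)).le
  have hmem : z 0 ∈ Set.Icc (-T) T := abs_le.1 (not_le.1 hzT).le
  rw [nearField, Set.indicator_of_mem hmem]
  linarith

variable (hcont : Continuous K)
include hcont

theorem minEnergy_segmentSet_le_add_integral_nearField [IsProbabilityMeasure μ] (hA : 0 < A)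
    (hs : 1 < s) (hR : 0 < R) (hpos : ∀ u ≥ X, 0 < k u)
    (hfar : ∀ u ≥ T, ∀ v ∈ Set.Icc u (s * u), |k (s⁻¹ * u)| ≤ A * k v)
    (hρ : (d - 1) * ρ ≤ (s - 1) * T) (hμ : ∀ᵐ x ∂μ, x ∈ tubeSet d R ρ) :
    minEnergy K (segmentSet d R) ≤
      A * energyE K μ + ((s - 1) * R)⁻¹ * ∫ u, nearField k s⁻¹ T (A * K 0) X u := by
  have hs0 : 0 < s := zero_lt_one.trans hs
  refine hpd.minEnergy_segmentSet_le (even_of_radial hrad) hcont.measurable hμ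
    (inv_nonneg.2 hs0.le) (mul_pos (sub_pos.2 hs) hR) ?_ hA.le
    (nearField_nonneg (mul_nonneg hA.le (hpd.apply_zero_nonneg hrad)))
    (integrable_nearField (continuousOn_profile_of_radial hrad hcont) (inv_nonneg.2 hs0.le))
    fun z hz => ?_
  · refine le_of_eq ?_
    field_simp
    ring
  · rw [apply_single_zero_of_radial hrad, abs_mul, abs_of_pos (inv_pos.2 hs0)]
    exact (le_abs_self _).trans
      (hpd.abs_profile_mul_le_add_nearField hrad hA hs.le hpos hfar hρ hz)

theorem profileIntegral_sub_integral_nearField_le_energyE [IsProbabilityMeasure μ] (hA : 0 < A)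
    (hs : 1 ≤ s) (hR : 0 < R) (hXR : X ≤ R) (hpos : ∀ u ≥ X, 0 < k u)
    (hfar : ∀ u ≥ T, ∀ v ∈ Set.Icc u (s * u), |k u| ≤ A * k v)
    (hρ : (d - 1) * ρ ≤ (s - 1) * T) (hμ : ∀ᵐ x ∂μ, x ∈ tubeSet d R ρ) :
    (4 * R)⁻¹ * (A⁻¹ * (2 * profileIntegral k R - ∫ u, nearField k 1 T (A * K 0) X u)) ≤
      energyE K μ := by
  have hk := continuousOn_profile_of_radial hrad hcont
  have hfield : Integrable (nearField k 1 T (A * K 0) X) := integrable_nearField hk zero_le_one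
  have hprofile : IntegrableOn (fun u => |k (|u|)|) (Set.Icc (-R) R) := by
    simpa only [one_mul] using (continuous_abs_comp_mul_abs hk zero_le_one).integrableOn_Icc
  let Q (u : ℝ) : ℝ := A⁻¹ * (|k (|u|)| - nearField k 1 T (A * K 0) X u)
  have hQ : IntegrableOn Q (Set.Icc (-R) R) := (hprofile.sub hfield.integrableOn).const_mul _
  have hfield_le := setIntegral_le_integral (s := Set.Icc (-R) R) hfield
    (.of_forall (nearField_nonneg (mul_nonneg hA.le (hpd.apply_zero_nonneg hrad))))
  calc _ ≤ (4 * R)⁻¹ * ∫ u in Set.Icc (-R) R, Q u := by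
        rw [integral_const_mul, integral_sub hprofile hfield.integrableOn,
          setIntegral_Icc_neg_comp_abs (f := fun t => |k t|) hR.le, ← profileIntegral]
        gcongr
    _ ≤ energyE K μ := by
      refine hpd.integral_le_energyE (even_of_radial hrad) hcont.measurable hR hμ hQ
        (fun z hz _ => ?_) fun z hz => ?_
      · have hz' := hpd.abs_profile_mul_le_add_nearField hrad (c := 1) hA hs hpos
          (by simpa only [one_mul] using hfar) hρ hz
        rw [one_mul] at hz'
        exact (inv_mul_le_iff₀ hA).2 (by linarith)
      · rw [hrad]
        exact (hpos _ (hXR.trans (hz.le.trans (PiLp.norm_apply_le z 0)))).le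

theorem energy_bounds_of_profileIntegral_add_le [IsProbabilityMeasure μ] {ε : ℝ} (hA : 1 < A)
    (hs : 1 < s) (hR : 0 < R) (hX : 0 ≤ X) (hXR : X ≤ R) (hT : 0 ≤ T) (hpos : ∀ u ≥ X, 0 < k u)
    (hfar : ∀ u ≥ T, ∀ v ∈ Set.Icc u (s * u), |k (s⁻¹ * u)| ≤ A * k v ∧ |k u| ≤ A * k v)
    (hρ : (d - 1) * ρ ≤ (s - 1) * T) (hε : ε ≤ 1 / 2)
    (hε' : ε ≤ (A - 1) * (s - 1) / (8 * A * s))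
    (herr : profileIntegral k T + X * (A * K 0) ≤ ε * profileIntegral k R)
    (hμ : ∀ᵐ x ∂μ, x ∈ tubeSet d R ρ) :
    (4 * R)⁻¹ * (A⁻¹ * profileIntegral k R) ≤ energyE K μ ∧
      minEnergy K (segmentSet d R) ≤ (2 * A - 1) * energyE K μ := by
  have hA0 : 0 < A := zero_lt_one.trans hA
  have hs0 : 0 < s := zero_lt_one.trans hs
  have : 0 < A - 1 := sub_pos.2 hA
  have hs1 : 0 < s - 1 := sub_pos.2 hs
  have hk := continuousOn_profile_of_radial hrad hcont
  have hAK : 0 ≤ A * K 0 := mul_nonneg hA0.le (hpd.apply_zero_nonneg hrad)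
  have hfield {c : ℝ} (hc : 0 < c) (hc1 : c ≤ 1) :
      ∫ u, nearField k c T (A * K 0) X u ≤ 2 * c⁻¹ * (ε * profileIntegral k R) :=
    (integral_nearField_le hk hc hc1 hT hAK hX).trans (by gcongr)
  have hG0 : 0 ≤ profileIntegral k R := profileIntegral_nonneg k hR.le
  have hlow : (4 * R)⁻¹ * (A⁻¹ * profileIntegral k R) ≤ energyE K μ := by
    refine le_trans ?_ (hpd.profileIntegral_sub_integral_nearField_le_energyE hrad hcont hA0 hs.le
      hR hXR hpos (fun u hu v hv => (hfar u hu v hv).2) hρ hμ)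
    gcongr
    linarith [hfield one_pos le_rfl, mul_le_mul_of_nonneg_right hε hG0]
  refine ⟨hlow, ?_⟩
  calc minEnergy K (segmentSet d R)
      ≤ A * energyE K μ + ((s - 1) * R)⁻¹ * ∫ u, nearField k s⁻¹ T (A * K 0) X u :=
        hpd.minEnergy_segmentSet_le_add_integral_nearField hrad hcont hA0 hs hR hpos
          (fun u hu v hv => (hfar u hu v hv).1) hρ hμ
    _ ≤ A * energyE K μ + ((s - 1) * R)⁻¹ *
          (2 * s * ((A - 1) * (s - 1) / (8 * A * s) * profileIntegral k R)) := by
      gcongr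
      refine (hfield (inv_pos.2 hs0) (inv_le_one_of_one_le₀ hs.le)).trans ?_
      rw [inv_inv]
      gcongr
    _ = A * energyE K μ + (A - 1) * ((4 * R)⁻¹ * (A⁻¹ * profileIntegral k R)) := by
      field_simp
      ring
    _ ≤ A * energyE K μ + (A - 1) * energyE K μ := by gcongr
    _ = (2 * A - 1) * energyE K μ := by ring

theorem eventually_energy_bounds {α : ℝ} (hrv : RegularlyVarying k α) {r : ℝ → ℝ}
    (hr0 : ∀ R, 0 ≤ r R)
    (hgrowth : ∀ b > 0, (fun R => profileIntegral k (b * (1 + r R))) =o[atTop] profileIntegral k)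
    (hA : 1 < A) :
    ∀ᶠ R in atTop, ∃ g > 0, ∀ μ : Measure (EuclideanSpace ℝ (Fin d)), IsProbabilityMeasure μ →
      (∀ᵐ x ∂μ, x ∈ tubeSet d R (r R)) →
        g ≤ energyE K μ ∧ minEnergy K (segmentSet d R) ≤ (2 * A - 1) * energyE K μ := by
  have : 0 < A - 1 := sub_pos.2 hA
  have : 0 < A := zero_lt_one.trans hA
  have hk := continuousOn_profile_of_radial hrad hcont
  obtain ⟨s, hs, hdilate⟩ := hrv.exists_eventually_dilate_le_mul hA
  obtain ⟨X, hX⟩ := eventually_atTop.1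
    (hdilate.and (hrv.eventually_pos.and (eventually_ge_atTop 0)))
  have hX0 : 0 ≤ X := (hX X le_rfl).2.2
  have hs1 : 0 < s - 1 := sub_pos.2 hs
  set b := max (X + 1) ((d - 1) / (s - 1))
  have hXb : X < b := (lt_add_one X).trans_le (le_max_left _ _)
  have hdb : d - 1 ≤ (s - 1) * b := (div_le_iff₀' hs1).1 (le_max_right _ _)
  have hb : 0 < b := hX0.trans_lt hXb
  have hG (R : ℝ) (hR : b ≤ R) : 0 < profileIntegral k R :=
    profileIntegral_pos hk hX0 (hXb.trans_le hR) fun t ht => (hX t ht.le).2.1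
  have hT (R : ℝ) : b ≤ b * (1 + r R) := le_mul_of_one_le_right hb.le (by linarith [hr0 R])
  have herr := profileIntegral_comp_add_const_isLittleO hk hb.le (hG b le_rfl) hT (hgrowth b hb)
    (X * (A * K 0))
  have hε : 0 < min (1 / 2) ((A - 1) * (s - 1) / (8 * A * s)) :=
    lt_min one_half_pos (by positivity)
  filter_upwards [herr.bound hε, eventually_ge_atTop b] with R herrR hbR
  have hR : 0 < R := hb.trans_le hbR
  have hGR := hG R hbR
  refine ⟨(4 * R)⁻¹ * (A⁻¹ * profileIntegral k R), by positivity, fun μ _ hμ => ?_⟩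
  rw [Real.norm_of_nonneg hGR.le] at herrR
  refine hpd.energy_bounds_of_profileIntegral_add_le hrad hcont hA hs hR hX0 (hXb.le.trans hbR)
    (hb.le.trans (hT R)) (fun u hu => (hX u hu).2.1)
    (fun u hu => (hX u (hXb.le.trans ((hT R).trans hu))).1) ?_ (min_le_left _ _) (min_le_right _ _)
    ((le_abs_self _).trans herrR) hμ
  nlinarith [mul_le_mul_of_nonneg_right hdb (hr0 R)]

theorem eventually_capacityE_ratio_mem_Icc {α : ℝ} (hrv : RegularlyVarying k α) {r : ℝ → ℝ}
    (hr0 : ∀ R, 0 ≤ r R)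
    (hgrowth : ∀ b > 0, (fun R => profileIntegral k (b * (1 + r R))) =o[atTop] profileIntegral k)
    (hA : 1 < A) :
    ∀ᶠ R in atTop, capacityE K (tubeSet d R (r R)) / capacityE K (segmentSet d R) ∈
      Set.Icc 1 (2 * A - 1) := by
  filter_upwards [hpd.eventually_energy_bounds hrad hcont hrv hr0 hgrowth hA,
    eventually_ge_atTop 0] with R ⟨g, hg, hbounds⟩ hR
  have hsub : segmentSet d R ⊆ tubeSet d R (r R) := by
    rw [segmentSet_eq_tubeSet_zero]
    exact tubeSet_mono_right (hr0 R)
  have hseg : (segmentSet d R).Nonempty := ⟨_, single_zero_mem_segmentSet ⟨le_rfl, hR⟩⟩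
  have htube := hseg.mono hsub
  have hpos : 0 < minEnergy K (tubeSet d R (r R)) :=
    hg.trans_le (le_minEnergy htube fun μ hμ hmem => (hbounds μ hμ hmem).1)
  have hupp : minEnergy K (segmentSet d R) / (2 * A - 1) ≤ minEnergy K (tubeSet d R (r R)) :=
    le_minEnergy htube fun μ hμ hmem => (div_le_iff₀' (by linarith)).2 (hbounds μ hμ hmem).2
  have hanti := hpd.minEnergy_anti (even_of_radial hrad) hcont.measurable hseg hsub
  rw [capacityE_eq_inv_minEnergy, capacityE_eq_inv_minEnergy, inv_div_inv]
  exact ⟨(one_le_div hpos).2 hanti,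
    (div_le_iff₀ hpos).2 ((div_le_iff₀' (by linarith)).1 hupp)⟩

end IsPosDefKernel

end Comparison

open Asymptotics in
theorem statement10_general {d : ℕ} (hd : 0 < d) {K : EuclideanSpace ℝ (Fin d) → ℝ} {k : ℝ → ℝ}
    (hcont : Continuous K) (hrad : ∀ x, K x = k ‖x‖) (hpd : IsPosDefKernel K) {α : ℝ}
    (hrv : RegularlyVarying k α) {r : ℝ → ℝ} (hr0 : ∀ R, 0 ≤ r R)
    (hgrowth : ∀ b > 0, (fun R => profileIntegral k (b * (1 + r R))) =o[atTop] profileIntegral k) :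
    Tendsto (fun R => capacityE K (tubeSet d R (r R)) / capacityE K (segmentSet d R))
      atTop (nhds 1) := by
  have : NeZero d := ⟨hd.ne'⟩
  refine tendsto_order.2 ⟨fun a ha => ?_, fun a ha => ?_⟩
  · filter_upwards [hpd.eventually_capacityE_ratio_mem_Icc hrad hcont hrv hr0 hgrowth one_lt_two]
      with R hR
    exact ha.trans_le hR.1
  · filter_upwards [hpd.eventually_capacityE_ratio_mem_Icc hrad hcont hrv hr0 hgrowth
      (A := (a + 3) / 4) (by linarith)] with R hR
    exact hR.2.trans_lt (by linarith)

/-- for `K` continuous isotropic positive definite with regularly varying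
radial profile of index `α ∈ [0,1]` (with `K(x) ∼ x⁻¹(log x)^{-γ}`, `γ < 1`, if `α = 1`),
and `r(R) = R^{o(1)}`, one has `Cap_K([0,R] × [0,r(R)]^{d-1}) ∼ Cap_K([0,R] × {0}^{d-1})`
as `R → ∞`. -/
theorem statement10 (d : ℕ) (hd : 2 ≤ d)
    (K : EuclideanSpace ℝ (Fin d) → ℝ) (k : ℝ → ℝ)
    (hcont : Continuous K) (hrad : ∀ x, K x = k ‖x‖) (hpd : IsPosDefKernel K)
    (α : ℝ) (hα0 : 0 ≤ α) (hα1 : α ≤ 1) (hrv : RegularlyVarying k α)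
    (hcrit : α = 1 → ∃ γ : ℝ, γ < 1 ∧
      Tendsto (fun x => k x / (x⁻¹ * Real.log x ^ (-γ))) atTop (nhds 1))
    (r : ℝ → ℝ) (hr0 : ∀ R : ℝ, 0 ≤ r R)
    (hro : Tendsto (fun R => Real.log (max (r R) 2) / Real.log R) atTop (nhds 0)) :
    Tendsto (fun R =>
        capacityE K (tubeSet d R (r R)) / capacityE K (segmentSet d R))
      atTop (nhds 1) := by
  have : NeZero d := ⟨by omega⟩
  exact statement10_general (by omega) hcont hrad hpd hrv hr0 fun b hb =>
    hrv.isLittleO_profileIntegral_mul_one_add (continuousOn_profile_of_radial hrad hcont)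
      (fun t ht => hpd.abs_profile_le hrad ht) hα1 hcrit hr0 hro hb
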